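/- arXiv:1012.3528 — 2 statements merged into one kernel-verified Lean document; each statement's English description precedes it below -/
import Mathlib

section
/- For the oscillating symbol V(r) = e^{−r^{2p}+r²}·sin(r^{2q}) with real exponents q > p > 1, the moments I(k) = ∫_0^∞ V(r)·e^{−r²}·r^{2k+1} dr satisfy |I(k)| ≤ (2q+1)^{-1}·Γ((k+2)/q) for all k ≥ 0. -/
open Real

lemma eg_lo : (0.5614:ℝ) < Real.eulerMascheroniConstant := by
  have h := Real.eulerMascheroniSeq_lt_eulerMascheroniConstant 31
  have h1 : Real.eulerMascheroniSeq 31 = (harmonic 31 : ℚ) - 5 * Real.log 2 := by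
    rw [Real.eulerMascheroniSeq]
    have : ((31:ℕ):ℝ) + 1 = 2 ^ 5 := by norm_num
    rw [this, Real.log_pow]; norm_num
  have h2 : ((harmonic 31 : ℚ) : ℝ) > 4.0272 := by
    have : (harmonic 31 : ℚ) > 4.0272 := by
      simp only [harmonic, Finset.sum_range_succ, Finset.sum_range_zero]; norm_num
    have h3 := (Rat.cast_lt (K := ℝ)).2 this
    push_cast at h3
    norm_num only at h3 ⊢
    linarith
  have := Real.log_two_lt_d9
  rw [h1] at h
  linarith

lemma eg_hi : Real.eulerMascheroniConstant < (0.593:ℝ) := by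
  have h := Real.eulerMascheroniConstant_lt_eulerMascheroniSeq' 32
  have h1 : Real.eulerMascheroniSeq' 32 = (harmonic 32 : ℚ) - 5 * Real.log 2 := by
    rw [Real.eulerMascheroniSeq']
    have : ((32:ℕ):ℝ) = 2 ^ 5 := by norm_num
    rw [if_neg (by norm_num), this, Real.log_pow]; norm_num
  have h2 : ((harmonic 32 : ℚ) : ℝ) < 4.0585 := by
    have : (harmonic 32 : ℚ) < 4.0585 := by
      simp only [harmonic, Finset.sum_range_succ, Finset.sum_range_zero]; norm_num
    have h3 := (Rat.cast_lt (K := ℝ)).2 this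
    push_cast at h3
    norm_num only at h3 ⊢
    linarith
  have := Real.log_two_gt_d9
  rw [h1] at h
  linarith

lemma conv_tangent {f : ℝ → ℝ} {S : Set ℝ} (hf : ConvexOn ℝ S f) {x y d : ℝ} (hx : x ∈ S)
    (hy : y ∈ S) (hd : HasDerivAt f d x) : f x + d * (y - x) ≤ f y := by
  rcases lt_trichotomy x y with h | h | h
  · have := hf.le_slope_of_hasDerivAt hx hy h hd
    rw [slope_def_field, le_div_iff₀ (by linarith)] at this
    linarith
  · subst h; simp
  · have := hf.slope_le_of_hasDerivAt hy hx h hd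
    rw [slope_def_field, div_le_iff₀ (by linarith)] at this
    linarith

lemma gam1 (x : ℝ) (hx : 0 < x) : 1 - Real.eulerMascheroniConstant * (x - 1) ≤ Real.Gamma x := by
  have := conv_tangent Real.convexOn_Gamma (x := 1) (y := x) (by simp) hx Real.hasDerivAt_Gamma_one
  rw [Real.Gamma_one] at this
  linarith

lemma gam2 (x : ℝ) (hx : 0 < x) :
    1 + (1 - Real.eulerMascheroniConstant) * (x - 2) ≤ Real.Gamma x := by
  have hd := Real.hasDerivAt_Gamma_nat 1
  have := conv_tangent Real.convexOn_Gamma (x := (1:ℕ) + 1) (y := x) (by norm_num) hx hd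
  norm_num at this
  linarith

lemma gam15 (x : ℝ) (hx : 0 < x) :
    √π / 2 * (1 + (2 - 2 * Real.log 2 - Real.eulerMascheroniConstant) * (x - 3 / 2))
      ≤ Real.Gamma x := by
  have e : Real.Gamma (3/2) = √π / 2 := by
    rw [show (3/2:ℝ) = 1/2 + 1 by norm_num, Real.Gamma_add_one (by norm_num), Real.Gamma_one_half_eq]
    ring
  have hd : HasDerivAt Real.Gamma (√π / 2 * (2 - 2 * Real.log 2 - Real.eulerMascheroniConstant)) (3/2) := by
    have h0 := Real.hasDerivAt_Gamma_one_half
    have h1 : HasDerivAt (fun y : ℝ => y - 1) 1 (3/2) := by simpa using (hasDerivAt_id (3/2:ℝ)).sub_const 1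
    have h2 : HasDerivAt (fun y : ℝ => (y - 1) * Real.Gamma (y - 1))
       (1 * Real.Gamma (3/2 - 1) + (3/2 - 1) * (-√π * (Real.eulerMascheroniConstant + 2 * Real.log 2) * 1)) (3/2) := by
      refine h1.mul (HasDerivAt.comp (h₂ := Real.Gamma) (3/2:ℝ) ?_ h1)
      norm_num at h0 ⊢
      exact h0
    have h3 : (3/2 - 1 : ℝ) = 1/2 := by norm_num
    rw [h3, Real.Gamma_one_half_eq] at h2
    have h4 := h2.congr_of_eventuallyEq (f₁ := Real.Gamma) (by
      filter_upwards [lt_mem_nhds (show (1:ℝ) < 3/2 by norm_num)] with y hy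
      have := Real.Gamma_add_one (s := y - 1) (by linarith)
      rw [← this]; congr 1; ring)
    exact h4.congr_deriv (by ring)
  have := conv_tangent Real.convexOn_Gamma (x := 3/2) (y := x) (by norm_num) hx hd
  rw [e] at this
  linarith

lemma gam3 (x : ℝ) (hx : 3 ≤ x) : x - 1 ≤ Real.Gamma x := by
  have hd := Real.hasDerivAt_Gamma_nat 2
  have := conv_tangent Real.convexOn_Gamma (x := (2:ℕ) + 1) (y := x) (by norm_num) (by simp; linarith) hd
  have e : Real.Gamma (3:ℝ) = 2 := by
    rw [show (3:ℝ) = 1 + 1 + 1 by norm_num, Real.Gamma_add_one (by norm_num), Real.Gamma_add_one (by norm_num), Real.Gamma_one]; norm_num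
  norm_num [harmonic, Finset.sum_range_succ] at this
  have := eg_hi
  nlinarith

/- numeric tangent bounds -/
lemma G1a (x : ℝ) (hx : 0 < x) (h : x ≤ 1) : 1 + 0.5614 * (1 - x) ≤ Real.Gamma x := by
  have := gam1 x hx; have := eg_lo; nlinarith
lemma G1b (x : ℝ) (hx : 1 ≤ x) : 1 - 0.593 * (x - 1) ≤ Real.Gamma x := by
  have := gam1 x (by linarith); have := eg_hi; nlinarith
lemma sqrtpi : 0.88622 ≤ √π / 2 := by
  have : (1.77244:ℝ) ≤ √π := by
    apply Real.le_sqrt_of_sq_le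
    have := Real.pi_gt_d6
    norm_num at this ⊢; linarith
  linarith
lemma G15a (x : ℝ) (hx : 0 < x) (h : x ≤ 3/2) : 0.88622 * (1 - 0.0524 * (3/2 - x)) ≤ Real.Gamma x := by
  have h1 := gam15 x hx; have := eg_lo; have := sqrtpi; have := Real.log_two_gt_d9
  have h2 : 1 - 0.0524 * (3/2 - x) ≤ 1 + (2 - 2 * Real.log 2 - Real.eulerMascheroniConstant) * (x - 3 / 2) := by
    nlinarith
  have h3 : 0 ≤ 1 - 0.0524 * (3/2 - x) := by linarith
  exact le_trans (mul_le_mul sqrtpi h2 h3 (by positivity)) h1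
lemma G15b (x : ℝ) (h : 3/2 ≤ x) : 0.88622 * (1 + 0.0206 * (x - 3/2)) ≤ Real.Gamma x := by
  have h1 := gam15 x (by linarith); have := eg_hi; have := sqrtpi; have := Real.log_two_lt_d9
  have h2 : 1 + 0.0206 * (x - 3/2) ≤ 1 + (2 - 2 * Real.log 2 - Real.eulerMascheroniConstant) * (x - 3 / 2) := by
    nlinarith
  have h3 : 0 ≤ 1 + 0.0206 * (x - 3/2) := by linarith
  exact le_trans (mul_le_mul sqrtpi h2 h3 (by positivity)) h1
lemma G2a (x : ℝ) (hx : 0 < x) (h : x ≤ 2) : 1 - 0.4386 * (2 - x) ≤ Real.Gamma x := by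
  have := gam2 x hx; have := eg_lo; nlinarith
lemma G2b (x : ℝ) (h : 2 ≤ x) : 1 + 0.407 * (x - 2) ≤ Real.Gamma x := by
  have := gam2 x (by linarith); have := eg_hi; nlinarith

noncomputable def PP (s : ℝ) : ℝ := 1 / (s + 1) - 1 / (s + 2) + 1 / (3 * (s + 3))

lemma PP_pos (s : ℝ) (hs : 0 < s) : 0 < PP s := by
  unfold PP
  have : 1 / (s + 2) < 1 / (s + 1) := one_div_lt_one_div_of_lt (by linarith) (by linarith)
  have : 0 < 1 / (3 * (s + 3)) := by positivity
  linarith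

/-- upper bounds of PP by chords -/
lemma PP_chord (a b s : ℝ) (ha : 0 ≤ a) (h1 : a ≤ s) (h2 : s ≤ b) (hab : a < b) :
    PP s ≤ PP a + (PP b - PP a) / (b - a) * (s - a) := by
  have key : ConvexOn ℝ (Set.Ici (0:ℝ)) PP := by
    have e : Set.EqOn (fun s : ℝ => 1 / ((s+1) * (s+2)) + 1 / (3 * (s + 3))) PP (Set.Ici 0) := by
      intro s hs
      have : (0:ℝ) ≤ s := hs
      simp only [PP]
      field_simp
      ring
    refine ConvexOn.congr ?_ e
    have cv : ∀ c : ℝ, 0 < c → ConvexOn ℝ (Set.Ici (0:ℝ)) (fun s => (s + c)⁻¹) := by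
      intro c hc
      have h := (convexOn_zpow (𝕜 := ℝ) (-1)).translate_left (c := c)
      refine (h.subset ?_ (convex_Ici 0)).congr ?_
      · intro x hx; simp at hx ⊢; linarith
      · intro x hx; simp
    have anti : ∀ c : ℝ, 0 < c → AntitoneOn (fun s : ℝ => (s + c)⁻¹) (Set.Ici (0:ℝ)) := by
      intro c hc x hx y hy hxy
      simp at hx hy
      exact inv_anti₀ (by linarith) (by linarith)
    have m := (cv 1 one_pos).mul (cv 2 two_pos) (fun x hx => by simp at hx; positivity)
      (fun x hx => by simp at hx; positivity)
      ((anti 1 one_pos).monovaryOn (anti 2 two_pos))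
    refine (m.add ((cv 3 three_pos).smul (show (0:ℝ) ≤ 1/3 by norm_num))).congr ?_
    intro x hx
    simp [mul_comm]
  have hb : (0:ℝ) ≤ b := by linarith
  have p1 : 0 ≤ (b - s)/(b-a) := div_nonneg (by linarith) (by linarith)
  have p2 : 0 ≤ (s - a)/(b-a) := div_nonneg (by linarith) (by linarith)
  have p3 : (b - s)/(b-a) + (s - a)/(b-a) = 1 := by
    rw [← add_div, div_eq_one_iff_eq (by linarith)]; ring
  have := key.2 (Set.mem_Ici.2 ha) (Set.mem_Ici.2 hb) p1 p2 p3
  simp only [smul_eq_mul] at this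
  have hne : b - a ≠ 0 := by linarith
  have e1 : (b - s)/(b-a) * a + (s-a)/(b-a) * b = s := by field_simp; ring
  rw [e1] at this
  refine this.trans (le_of_eq ?_)
  field_simp; ring

/-- chord bound in numeric form -/
lemma PPc (a b m n s : ℝ) (ha : 0 ≤ a) (h1 : a ≤ s) (h2 : s ≤ b) (hab : a < b)
    (hm : PP a ≤ m) (hn : PP b ≤ n) : PP s * (b - a) ≤ m * (b - s) + n * (s - a) := by
  have h := PP_chord a b s ha h1 h2 hab
  have h3 : PP s * (b - a) ≤ PP a * (b - s) + PP b * (s - a) := by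
    calc PP s * (b - a) ≤ (PP a + (PP b - PP a) / (b - a) * (s - a)) * (b - a) :=
          mul_le_mul_of_nonneg_right h (by linarith)
      _ = _ := by
          have hne : b - a ≠ 0 := by linarith
          field_simp; ring
  nlinarith

lemma PP0 : PP 0 ≤ 0.6112 := by norm_num [PP]
lemma PP3 : PP 0.3 ≤ 0.4355 := by norm_num [PP]
lemma PP5 : PP 0.5 ≤ 0.36191 := by norm_num [PP]
lemma PP6 : PP 0.6 ≤ 0.33298 := by norm_num [PP]
lemma PP65 : PP 0.65 ≤ 0.32003 := by norm_num [PP]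
lemma PP75 : PP 0.75 ≤ 0.296682 := by norm_num [PP]
lemma PP9 : PP 0.9 ≤ 0.266959 := by norm_num [PP]
lemma PP1 : PP 1 ≤ 0.250001 := by norm_num [PP]
lemma PP11 : PP 1.1 ≤ 0.23494 := by norm_num [PP]
lemma PP12 : PP 1.2 ≤ 0.221411 := by norm_num [PP]
lemma PP14 : PP 1.4 ≤ 0.1985 := by norm_num [PP]
lemma PP2 : PP 2 ≤ 0.150001 := by norm_num [PP]

lemma PPA (s : ℝ) (h : 0 ≤ s) (h' : s ≤ 0.3) : PP s * 0.3 ≤ 0.6112 * (0.3 - s) + 0.4355 * s := by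
  have := PPc 0 0.3 _ _ s le_rfl h h' (by norm_num) PP0 PP3; linarith
lemma PPB (s : ℝ) (h : 0.3 ≤ s) (h' : s ≤ 0.5) : PP s * 0.2 ≤ 0.4355 * (0.5 - s) + 0.36191 * (s - 0.3) := by
  have := PPc 0.3 0.5 _ _ s (by norm_num) h h' (by norm_num) PP3 PP5; linarith
lemma PPC (s : ℝ) (h : 0.5 ≤ s) (h' : s ≤ 0.6) : PP s * 0.1 ≤ 0.36191 * (0.6 - s) + 0.33298 * (s - 0.5) := by
  have := PPc 0.5 0.6 _ _ s (by norm_num) h h' (by norm_num) PP5 PP6; linarith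
lemma PPD (s : ℝ) (h : 0.6 ≤ s) (h' : s ≤ 0.65) : PP s * 0.05 ≤ 0.33298 * (0.65 - s) + 0.32003 * (s - 0.6) := by
  have := PPc 0.6 0.65 _ _ s (by norm_num) h h' (by norm_num) PP6 PP65; linarith
lemma PPE (s : ℝ) (h : 0.65 ≤ s) (h' : s ≤ 0.75) : PP s * 0.1 ≤ 0.32003 * (0.75 - s) + 0.296682 * (s - 0.65) := by
  have := PPc 0.65 0.75 _ _ s (by norm_num) h h' (by norm_num) PP65 PP75; linarith
lemma PPF (s : ℝ) (h : 0.75 ≤ s) (h' : s ≤ 0.9) : PP s * 0.15 ≤ 0.296682 * (0.9 - s) + 0.266959 * (s - 0.75) := by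
  have := PPc 0.75 0.9 _ _ s (by norm_num) h h' (by norm_num) PP75 PP9; linarith
lemma PPG (s : ℝ) (h : 0.9 ≤ s) (h' : s ≤ 1) : PP s * 0.1 ≤ 0.266959 * (1 - s) + 0.250001 * (s - 0.9) := by
  have := PPc 0.9 1 _ _ s (by norm_num) h h' (by norm_num) PP9 PP1; linarith
lemma PPH (s : ℝ) (h : 1 ≤ s) (h' : s ≤ 1.1) : PP s * 0.1 ≤ 0.250001 * (1.1 - s) + 0.23494 * (s - 1) := by
  have := PPc 1 1.1 _ _ s (by norm_num) h h' (by norm_num) PP1 PP11; linarith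
lemma PPI (s : ℝ) (h : 1.1 ≤ s) (h' : s ≤ 1.2) : PP s * 0.1 ≤ 0.23494 * (1.2 - s) + 0.221411 * (s - 1.1) := by
  have := PPc 1.1 1.2 _ _ s (by norm_num) h h' (by norm_num) PP11 PP12; linarith
lemma PPJ (s : ℝ) (h : 1.2 ≤ s) (h' : s ≤ 1.4) : PP s * 0.2 ≤ 0.221411 * (1.4 - s) + 0.1985 * (s - 1.2) := by
  have := PPc 1.2 1.4 _ _ s (by norm_num) h h' (by norm_num) PP12 PP14; linarith
lemma PPK (s : ℝ) (h : 1.4 ≤ s) (h' : s ≤ 2) : PP s * 0.6 ≤ 0.1985 * (2 - s) + 0.150001 * (s - 1.4) := by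
  have := PPc 1.4 2 _ _ s (by norm_num) h h' (by norm_num) PP14 PP2; linarith

lemma numA0 (h : ℝ) (h0 : 0 < h) (h1 : h < 1) :
    (PP h + 0.36788 * 0.9082) * (1 + h / 2) ≤ Real.Gamma (2 * h) := by
  rcases le_total h 0.5 with c | c
  · have g := G1a (2*h) (by linarith) (by linarith)
    rcases le_total h 0.3 with d | d
    · have := PPA h h0.le d; nlinarith
    · have := PPB h d c; nlinarith
  rcases le_total h 0.6 with d | d
  · have g := G1b (2*h) (by linarith)
    have := PPC h c d; nlinarith
  have gg : ∀ P : ℝ, (P + 0.36788 * 0.9082) * (1 + h / 2) ≤ 0.88622 * (1 - 0.0524 * (3/2 - 2 * h)) → h ≤ 0.75 →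
     (P + 0.36788 * 0.9082) * (1 + h / 2) ≤ Real.Gamma (2 * h) := fun P hP hh =>
       hP.trans (G15a (2*h) (by linarith) (by linarith))
  rcases le_total h 0.65 with e | e
  · rcases le_total h 0.61 with f | f
    · have g := G1b (2*h) (by linarith)
      have := PPD h d e; nlinarith
    · have := PPD h d e
      refine gg _ ?_ (by linarith)
      nlinarith
  rcases le_total h 0.75 with f | f
  · have := PPE h e f
    refine gg _ ?_ (by linarith)
    nlinarith
  have g := G15b (2*h) (by linarith)
  rcases le_total h 0.9 with e | e
  · have := PPF h f e; nlinarith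
  · have := PPG h e h1.le; nlinarith

lemma numA1a (h : ℝ) (h0 : 0 < h) (h1 : h ≤ 1/2) :
    (PP (2*h) + 0.36788 * (0.9082 + 0.54924 * h)) * (1 + h / 2) ≤ Real.Gamma (3 * h) := by
  rcases le_total (3*h) 1 with c | c
  · have g := G1a (3*h) (by linarith) (by linarith)
    rcases le_total (2*h) 0.3 with d | d
    · have := PPA (2*h) (by linarith) d; nlinarith
    rcases le_total (2*h) 0.5 with d' | d'
    · have := PPB _ d d'; nlinarith
    rcases le_total (2*h) 0.6 with d'' | d''
    · have := PPC _ d' d''; nlinarith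
    rcases le_total (2*h) 0.65 with e | e
    · have := PPD _ d'' e; nlinarith
    · have := PPE _ e (by linarith); nlinarith
  have g := G15a (3*h) (by linarith) (by linarith)
  rcases le_total (2*h) 0.75 with e | e
  · have := PPE (2*h) (by linarith) e; nlinarith
  rcases le_total (2*h) 0.9 with f | f
  · have := PPF _ e f; nlinarith
  · have := PPG _ f (by linarith); nlinarith

lemma numA1b (h : ℝ) (h0 : 1/2 ≤ h) (h1 : h < 1) :
    (PP (2*h) + 0.36788 * (1.18282 + 0.71516 * (h - 1/2))) * (1 + h / 2) ≤ Real.Gamma (3 * h) := by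
  rcases le_total (2*h) 1.1 with c | c
  · have g := G15b (3*h) (by linarith)
    have := PPH (2*h) (by linarith) c; nlinarith
  rcases le_total (2*h) 1.17 with d | d
  · have g := G15b (3*h) (by linarith)
    have := PPI (2*h) (by linarith) (by linarith); nlinarith
  rcases le_total (2*h) 1.2 with d' | d'
  · have g := G2a (3*h) (by linarith) (by linarith)
    have := PPI (2*h) (by linarith) (by linarith); nlinarith
  rcases le_total (3*h) 2 with e | e
  · have g := G2a (3*h) (by linarith) (by linarith)
    have := PPJ (2*h) (by linarith) (by linarith); nlinarith
  have g := G2b (3*h) (by linarith)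
  rcases le_total (2*h) 1.4 with f | f
  · have := PPJ (2*h) (by linarith) (by linarith); nlinarith
  · have := PPK (2*h) (by linarith) (by linarith); nlinarith

lemma numA2a (h : ℝ) (h0 : 0 < h) (h1 : 2 * h ≤ 1/2) :
    (PP (3*h) + 0.36788 * (0.9082 + 0.54924 * (2*h))) * (1 + h / 2) ≤ Real.Gamma (4 * h) := by
  have g := G1a (4*h) (by linarith) (by linarith)
  rcases le_total (3*h) 0.3 with d | d
  · have := PPA (3*h) (by linarith) d; nlinarith
  rcases le_total (3*h) 0.5 with d' | d'
  · have := PPB _ d d'; nlinarith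
  rcases le_total (3*h) 0.6 with d'' | d''
  · have := PPC _ d' d''; nlinarith
  rcases le_total (3*h) 0.65 with e | e
  · have := PPD _ d'' e; nlinarith
  · have := PPE _ e (by linarith); nlinarith

lemma numA2b (h : ℝ) (h0 : 1/2 ≤ 2 * h) (h1 : h ≤ 0.4) :
    (PP (3*h) + 0.36788 * (1.18282 + 0.71516 * (2 * h - 1/2))) * (1 + h / 2) ≤ Real.Gamma (4 * h) := by
  rcases le_total (4*h) 1.5 with c | c
  · have g := G15a (4*h) (by linarith) (by linarith)
    rcases le_total (3*h) 0.9 with d | d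
    · have := PPF (3*h) (by linarith) d; nlinarith
    rcases le_total (3*h) 1 with e | e
    · have := PPG (3*h) (by linarith) e; nlinarith
    rcases le_total (3*h) 1.1 with f | f
    · have := PPH (3*h) (by linarith) f; nlinarith
    · have := PPI (3*h) f (by linarith); nlinarith
  · have g := G15b (4*h) (by linarith)
    have := PPI (3*h) (by linarith) (by linarith); nlinarith

lemma numA3a (s h : ℝ) (h0 : 0 < h) (h1 : 4 * h ≤ s) (h2 : s ≤ 1) (h3 : s - h ≤ 1/2) :
    (PP s + 0.36788 * (0.9082 + 0.54924 * (s - h))) * (1 + h / 2) ≤ Real.Gamma (s + h) := by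
  have g := G1a (s+h) (by linarith) (by linarith)
  rcases le_total s 0.3 with d | d
  · have := PPA s (by linarith) d; nlinarith
  rcases le_total s 0.5 with d' | d'
  · have := PPB _ d d'; nlinarith
  rcases le_total s 0.6 with d'' | d''
  · have := PPC _ d' d''; nlinarith
  rcases le_total s 0.65 with e | e
  · have := PPD _ d'' e; nlinarith
  · have := PPE _ e (by linarith); nlinarith

lemma numA3b (s h : ℝ) (h0 : 0 < h) (h1 : 4 * h ≤ s) (h2 : s ≤ 1) (h3 : 1/2 ≤ s - h) :
    (PP s + 0.36788 * (1.18282 + 0.71516 * (s - h - 1/2))) * (1 + h / 2) ≤ Real.Gamma (s + h) := by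
  rcases le_total (s+h) 1 with c | c
  · have g := G1a (s+h) (by linarith) (by linarith)
    rcases le_total s 0.6 with d'' | d''
    · have := PPC s (by linarith) d''; nlinarith
    rcases le_total s 0.65 with e | e
    · have := PPD _ d'' e; nlinarith
    rcases le_total s 0.75 with e | e
    · have := PPE _ (by linarith) e; nlinarith
    rcases le_total s 0.9 with f | f
    · have := PPF _ (by linarith) f; nlinarith
    · have := PPG s (by linarith) h2; nlinarith
  · have g1 := G1b (s+h) (by linarith)
    have g := G15a (s+h) (by linarith) (by linarith)
    rcases le_total s 0.9 with f | f
    · have := PPF s (by linarith) f; nlinarith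
    · have := PPG s (by linarith) h2; nlinarith

lemma numB2 (h : ℝ) (h0 : 0.4 ≤ h) (h1 : 3 * h ≤ 2) :
    (0.76 * (2 - 3 * h) + 0.645 * (3 * h - 1)) * (1 + h / 2) ≤ Real.Gamma (4 * h) := by
  rcases le_total h 0.45 with c | c
  · have g := G15b (4*h) (by linarith)
    nlinarith
  rcases le_total h 0.5 with d | d
  · have g := G2a (4*h) (by linarith) (by linarith)
    nlinarith
  · have g := G2b (4*h) (by linarith)
    nlinarith

lemma numB2' (h s : ℝ) (h0 : 0 < h) (h1 : 2 ≤ s) (h2 : s ≤ 3) (h3 : 3 * h ≤ s) (h4 : h < 1) :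
    (0.645 * (3 - s) + 1.26 * (s - 2)) * (1 + h / 2) ≤ Real.Gamma (s + h) := by
  rcases le_total (s+h) 3 with c | c
  · have g := G2b (s+h) (by linarith)
    nlinarith
  · have g := gam3 (s+h) (by linarith)
    nlinarith

lemma numB3 (h s : ℝ) (h0 : 0 < h) (h1 : 1 ≤ s) (h2 : s ≤ 2) (h3 : 4 * h ≤ s) :
    (0.76 * (2 - s) + 0.645 * (s - 1)) * (1 + h / 2) ≤ Real.Gamma (s + h) := by
  rcases le_total (s+h) 1.5 with c | c
  · have g := G15a (s+h) (by linarith) (by linarith)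
    nlinarith
  · rcases le_total (s+h) 2 with d | d
    · have g := G15b (s+h) (by linarith)
      nlinarith
    · have g := G2b (s+h) (by linarith)
      nlinarith

lemma numC (h s : ℝ) (h0 : 0 < h) (h1 : h < 1) (hs : 3 ≤ s) :
    Real.Gamma s * (1 + h / 2) ≤ Real.Gamma (s + h) := by
  have hc := Real.convexOn_log_Gamma
  have p1 := Real.Gamma_pos_of_pos (show 0 < s - 1 by linarith)
  have p2 := Real.Gamma_pos_of_pos (show 0 < s by linarith)
  have p3 := Real.Gamma_pos_of_pos (show 0 < s + h by linarith)
  have e : Real.Gamma s = (s - 1) * Real.Gamma (s - 1) := by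
    rw [← Real.Gamma_add_one (by linarith)]; congr 1; ring
  have sl := hc.slope_mono_adjacent (x := s - 1) (y := s) (z := s + h)
    (by simp; linarith) (by simp; linarith) (by linarith) (by linarith)
  simp only [Function.comp] at sl
  have l1 : Real.log (Real.Gamma s) = Real.log (s - 1) + Real.log (Real.Gamma (s-1)) := by
    rw [e, Real.log_mul (by linarith) p1.ne']
  have l2 : Real.log 2 ≤ Real.log (s - 1) := Real.log_le_log (by norm_num) (by linarith)
  rw [show s - (s - 1) = 1 by ring, show s + h - s = h by ring, div_one, le_div_iff₀ h0] at sl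
  have l3 : Real.log (1 + h / 2) ≤ h / 2 := by
    have := Real.log_le_sub_one_of_pos (show 0 < 1 + h/2 by linarith); linarith
  have l4 := Real.log_two_gt_d9
  rw [← Real.log_le_log_iff (by positivity) p3, Real.log_mul p2.ne' (by positivity)]
  nlinarith

/-! Taylor bounds -/
lemma le_of_deriv_le' {f g f' g' : ℝ → ℝ} (h0 : f 0 ≤ g 0) (hf : ∀ x, HasDerivAt f (f' x) x)
    (hg : ∀ x, HasDerivAt g (g' x) x) (h : ∀ x, 0 ≤ x → f' x ≤ g' x) (x : ℝ) (hx : 0 ≤ x) :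
    f x ≤ g x := by
  have hm : MonotoneOn (fun x => g x - f x) (Set.Ici 0) := by
    apply monotoneOn_of_hasDerivWithinAt_nonneg (convex_Ici 0) (f' := fun x => g' x - f' x)
    · exact fun x _ => ((hg x).sub (hf x)).continuousAt.continuousWithinAt
    · exact fun x _ => ((hg x).sub (hf x)).hasDerivWithinAt
    · intro x hx
      have := h x (interior_subset hx)
      linarith
  have := hm (Set.mem_Ici.2 le_rfl) (Set.mem_Ici.2 hx) hx
  simp only at this
  linarith

lemma tay1 (x : ℝ) (hx : 0 ≤ x) : 1 - x^2/2 ≤ Real.cos x := Real.one_sub_sq_div_two_le_cos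
lemma tay2 (x : ℝ) (hx : 0 ≤ x) : x - x^3/6 ≤ Real.sin x :=
  le_of_deriv_le' (f := fun x => x - x^3/6) (g := Real.sin) (f' := fun x => 1 - x^2/2) (g' := Real.cos)
    (by simp) (fun x => by
      refine ((hasDerivAt_id' x).sub ((hasDerivAt_pow 3 x).div_const 6)).congr_deriv ?_
      push_cast; ring) Real.hasDerivAt_sin tay1 x hx
lemma tay3 (x : ℝ) (hx : 0 ≤ x) : Real.cos x ≤ 1 - x^2/2 + x^4/24 :=
  le_of_deriv_le' (g := fun x => 1 - x^2/2 + x^4/24) (f := Real.cos) (g' := fun x => -(x - x^3/6))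
    (f' := fun x => - Real.sin x)
    (by simp) Real.hasDerivAt_cos (fun x => by
      refine (((hasDerivAt_const x 1).sub ((hasDerivAt_pow 2 x).div_const 2)).add
        ((hasDerivAt_pow 4 x).div_const 24)).congr_deriv ?_
      push_cast; ring) (fun x hx => neg_le_neg (tay2 x hx)) x hx
lemma tay4 (x : ℝ) (hx : 0 ≤ x) : Real.sin x ≤ x - x^3/6 + x^5/120 :=
  le_of_deriv_le' (g := fun x => x - x^3/6 + x^5/120) (f := Real.sin) (g' := fun x => 1 - x^2/2 + x^4/24)
    (f' := Real.cos)
    (by simp) Real.hasDerivAt_sin (fun x => by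
      refine (((hasDerivAt_id' x).sub ((hasDerivAt_pow 3 x).div_const 6)).add
        ((hasDerivAt_pow 5 x).div_const 120)).congr_deriv ?_
      push_cast; ring) tay3 x hx
lemma tay5 (x : ℝ) (hx : 0 ≤ x) : 1 - x^2/2 + x^4/24 - x^6/720 ≤ Real.cos x :=
  le_of_deriv_le' (f := fun x => 1 - x^2/2 + x^4/24 - x^6/720) (g := Real.cos)
    (f' := fun x => -(x - x^3/6 + x^5/120))
    (g' := fun x => - Real.sin x)
    (by simp) (fun x => by
      refine ((((hasDerivAt_const x 1).sub ((hasDerivAt_pow 2 x).div_const 2)).add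
        ((hasDerivAt_pow 4 x).div_const 24)).sub ((hasDerivAt_pow 6 x).div_const 720)).congr_deriv ?_
      push_cast; ring) Real.hasDerivAt_cos (fun x hx => neg_le_neg (tay4 x hx)) x hx
lemma tay6 (x : ℝ) (hx : 0 ≤ x) : x - x^3/6 + x^5/120 - x^7/5040 ≤ Real.sin x :=
  le_of_deriv_le' (f := fun x => x - x^3/6 + x^5/120 - x^7/5040) (g := Real.sin)
    (f' := fun x => 1 - x^2/2 + x^4/24 - x^6/720)
    (g' := Real.cos)
    (by simp) (fun x => by
      refine ((((hasDerivAt_id' x).sub ((hasDerivAt_pow 3 x).div_const 6)).add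
        ((hasDerivAt_pow 5 x).div_const 120)).sub ((hasDerivAt_pow 7 x).div_const 5040)).congr_deriv ?_
      push_cast; ring) Real.hasDerivAt_sin tay5 x hx
lemma tay7 (x : ℝ) (hx : 0 ≤ x) : Real.cos x ≤ 1 - x^2/2 + x^4/24 - x^6/720 + x^8/40320 :=
  le_of_deriv_le' (g := fun x => 1 - x^2/2 + x^4/24 - x^6/720 + x^8/40320) (f := Real.cos)
    (g' := fun x => -(x - x^3/6 + x^5/120 - x^7/5040))
    (f' := fun x => - Real.sin x)
    (by simp) Real.hasDerivAt_cos (fun x => by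
      refine (((((hasDerivAt_const x 1).sub ((hasDerivAt_pow 2 x).div_const 2)).add
        ((hasDerivAt_pow 4 x).div_const 24)).sub ((hasDerivAt_pow 6 x).div_const 720)).add
        ((hasDerivAt_pow 8 x).div_const 40320)).congr_deriv ?_
      push_cast; ring) (fun x hx => neg_le_neg (tay6 x hx)) x hx

lemma cos1_le : Real.cos 1 ≤ 0.54031 := by
  have := tay7 1 zero_le_one; norm_num at this ⊢; linarith
lemma sin1_ge : 0.84146 ≤ Real.sin 1 := by
  have := tay6 1 zero_le_one; norm_num at this ⊢; linarith

lemma expsin (t : ℝ) (h0 : 0 ≤ t) (h1 : t ≤ 1) : Real.exp (-t) * Real.sin t ≤ t - t^2 + t^3/3 := by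
  have h := tay4 t h0
  have he : 1 + t + t^2/2 + t^3/6 + t^4/24 ≤ Real.exp t := by
    have := Real.sum_le_exp_of_nonneg h0 5
    simp [Finset.sum_range_succ, Nat.factorial] at this
    linarith
  rw [Real.exp_neg, inv_mul_le_iff₀ (Real.exp_pos t)]
  have hp : 0 ≤ t - t^2 + t^3/3 := by
    have : 0 ≤ t * (1 - t) := mul_nonneg h0 (by linarith)
    have : 0 ≤ t^3 := by positivity
    nlinarith
  calc Real.sin t ≤ t - t^3/6 + t^5/120 := h
    _ ≤ (1 + t + t^2/2 + t^3/6 + t^4/24) * (t - t^2 + t^3/3) := by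
      have h5 : 0 ≤ t^5 := by positivity
      have h6 : t^6 ≤ t^5 := pow_le_pow_of_le_one h0 h1 (by norm_num)
      have h6' : 0 ≤ t^6 := by positivity
      have h7 : 0 ≤ t^7 := by positivity
      ring_nf
      nlinarith
    _ ≤ _ := mul_le_mul_of_nonneg_right he hp

lemma Gone : ∫ t in (1:ℝ)..π, Real.sin t ≤ 1.5404 := by
  rw [integral_sin, Real.cos_pi]
  have := cos1_le; linarith

lemma Gzero : ∫ t in (1:ℝ)..π, Real.sin t / t ≤ 0.9082 := by
  have hpi : (1:ℝ) ≤ π := by have := Real.pi_gt_three; linarith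
  have c : ContinuousOn (fun t : ℝ => Real.sin t / t) (Set.uIcc 1 π) := by
    rw [Set.uIcc_of_le hpi]
    apply ContinuousOn.div (by fun_prop) (by fun_prop)
    intro x hx; have := hx.1; linarith
  set Q : ℝ → ℝ := fun t => (t^4-9.5*t^3+35.1425*t^2-63.1075*t+54.8691)/18.4041 with hQ
  set F : ℝ → ℝ := fun t => ((-(t^4-9.5*t^3+35.1425*t^2-63.1075*t+54.8691) + (12*t^2-57*t+70.285) - 24) * Real.cos t
     + ((4*t^3-28.5*t^2+70.285*t-63.1075) - (24*t-57)) * Real.sin t)/18.4041 with hF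
  have step : ∫ t in (1:ℝ)..π, Real.sin t / t ≤ ∫ t in (1:ℝ)..π, Q t * Real.sin t := by
    apply intervalIntegral.integral_mono_on hpi c.intervalIntegrable
    · apply Continuous.intervalIntegrable; fun_prop
    · intro t ht
      have hs : 0 ≤ Real.sin t := Real.sin_nonneg_of_nonneg_of_le_pi (by linarith [ht.1]) ht.2
      have ht0 : 0 < t := by linarith [ht.1]
      rw [div_eq_inv_mul]
      apply mul_le_mul_of_nonneg_right _ hs
      rw [inv_le_iff_one_le_mul₀ ht0]
      have : 0 ≤ (t-1) * (t^2-4.25*t+4.29)^2 := mul_nonneg (by linarith [ht.1]) (sq_nonneg _)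
      have e : Q t * t = 1 + (t-1) * (t^2-4.25*t+4.29)^2 / 18.4041 := by
        simp only [hQ]; field_simp; ring
      rw [e]
      have : 0 ≤ (t-1) * (t^2-4.25*t+4.29)^2 / 18.4041 := by positivity
      linarith
  have ftc : ∫ t in (1:ℝ)..π, Q t * Real.sin t = F π - F 1 := by
    apply intervalIntegral.integral_eq_sub_of_hasDerivAt
    · intro t _
      have p1 : HasDerivAt (fun t : ℝ => -(t^4-9.5*t^3+35.1425*t^2-63.1075*t+54.8691) + (12*t^2-57*t+70.285) - 24)
          (-(4*t^3-28.5*t^2+70.285*t-63.1075) + (24*t - 57)) t := by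
        have q4 := hasDerivAt_pow 4 t
        have q3 := (hasDerivAt_pow 3 t).const_mul 9.5
        have q2 := (hasDerivAt_pow 2 t).const_mul 35.1425
        have q1 := (hasDerivAt_id' t).const_mul 63.1075
        have r2 := (hasDerivAt_pow 2 t).const_mul 12
        have r1 := (hasDerivAt_id' t).const_mul 57
        refine ((((((q4.sub q3).add q2).sub q1).add_const 54.8691).neg.add ((r2.sub r1).add_const 70.285)).sub_const 24).congr_deriv ?_
        push_cast; ring
      have p2 : HasDerivAt (fun t : ℝ => (4*t^3-28.5*t^2+70.285*t-63.1075) - (24*t-57))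
          ((12*t^2-57*t+70.285) - 24) t := by
        have q3 := (hasDerivAt_pow 3 t).const_mul 4
        have q2 := (hasDerivAt_pow 2 t).const_mul 28.5
        have q1 := (hasDerivAt_id' t).const_mul 70.285
        have r1 := (hasDerivAt_id' t).const_mul 24
        refine ((((q3.sub q2).add q1).sub_const 63.1075).sub (r1.sub_const 57)).congr_deriv ?_
        push_cast; ring
      refine (((p1.mul (Real.hasDerivAt_cos t)).add (p2.mul (Real.hasDerivAt_sin t))).div_const 18.4041).congr_deriv ?_
      simp only [hQ]; ring
    · apply Continuous.intervalIntegrable; fun_prop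
  rw [ftc] at step
  refine step.trans ?_
  have s1 := sin1_ge
  have c1 := cos1_le
  have hp1 := Real.pi_gt_d6
  have hp2 := Real.pi_lt_d6
  have eP : F π = (π^4-9.5*π^3+23.1425*π^2-6.1075*π+8.5841)/18.4041 := by
    simp only [hF, Real.cos_pi, Real.sin_pi]; ring
  have e1 : F 1 = (-17.1191 * Real.cos 1 + 15.6775 * Real.sin 1)/18.4041 := by
    simp only [hF]; ring
  have bP : π^4-9.5*π^3+23.1425*π^2-6.1075*π+8.5841 ≤ 20.6569 := by
    obtain ⟨d, hd⟩ : ∃ d, π = 3.141592 + d := ⟨π - 3.141592, by ring⟩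
    have d0 : 0 ≤ d := by linarith
    have d1 : d ≤ 0.000001 := by linarith
    rw [hd]
    have d2 : d^2 ≤ d := by nlinarith
    have d3 : 0 ≤ d^3 := by positivity
    have d4 : d^4 ≤ d := by nlinarith [sq_nonneg d, mul_nonneg d0 d0, mul_nonneg (mul_nonneg d0 d0) d0]
    nlinarith
  rw [eP, e1]
  rw [← sub_div, div_le_iff₀ (by norm_num)]
  nlinarith

/-! Bounds on the model integral over [1, π] -/
lemma sqrt_lin (t : ℝ) (ht : 1 ≤ t) : t ^ (1/2 : ℝ) ≤ (t + 1.69) * (5 / 13) := by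
  rw [← Real.sqrt_eq_rpow]
  apply Real.sqrt_le_iff.2 ⟨by positivity, ?_⟩
  nlinarith [sq_nonneg (t - 1.69)]

lemma rpow_lin_a (t σ : ℝ) (ht : 1 ≤ t) (h0 : 0 ≤ σ) (h1 : σ ≤ 1/2) :
    t ^ σ ≤ (1 - 0.7 * σ) + σ * (10 / 13) * t := by
  have h := Real.geom_mean_le_arith_mean2_weighted (w₁ := 1 - 2*σ) (w₂ := 2*σ) (p₁ := 1)
    (p₂ := t ^ (1/2 : ℝ)) (by linarith) (by linarith) zero_le_one (by positivity) (by ring)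
  rw [Real.one_rpow, one_mul, ← Real.rpow_mul (by linarith)] at h
  rw [show (1/2 : ℝ) * (2 * σ) = σ by ring] at h
  have := mul_le_mul_of_nonneg_left (sqrt_lin t ht) h0
  nlinarith

lemma rpow_lin_b (t σ : ℝ) (ht : 1 ≤ t) (h0 : 1/2 ≤ σ) (h1 : σ ≤ 1) :
    t ^ σ ≤ (1 - σ) * 1.3 + ((1 - σ) * (10 / 13) + (2 * σ - 1)) * t := by
  have h := Real.geom_mean_le_arith_mean2_weighted (w₁ := 2 - 2*σ) (w₂ := 2*σ - 1)
    (p₁ := t ^ (1/2 : ℝ))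
    (p₂ := t) (by linarith) (by linarith) (by positivity) (by positivity) (by ring)
  rw [← Real.rpow_mul (by linarith), ← Real.rpow_add (by linarith)] at h
  rw [show (1/2 : ℝ) * (2 - 2 * σ) + (2 * σ - 1) = σ by ring] at h
  have := mul_le_mul_of_nonneg_left (sqrt_lin t ht) (show 0 ≤ 2 - 2 * σ by linarith)
  nlinarith

lemma Ggen (σ α β : ℝ) (hα : 0 ≤ α) (hβ : 0 ≤ β) (h : ∀ t : ℝ, 1 ≤ t → t ^ σ ≤ α + β * t) :
    ∫ t in (1:ℝ)..π, t ^ (σ - 1) * Real.sin t ≤ α * 0.9082 + β * 1.5404 := by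
  have hpi : (1:ℝ) ≤ π := by have := Real.pi_gt_three; linarith
  have c : ContinuousOn (fun t : ℝ => Real.sin t / t) (Set.uIcc 1 π) := by
    rw [Set.uIcc_of_le hpi]
    apply ContinuousOn.div (by fun_prop) (by fun_prop)
    intro x hx; have := hx.1; linarith
  have c2 : ContinuousOn (fun t : ℝ => t ^ (σ - 1) * Real.sin t) (Set.uIcc 1 π) := by
    rw [Set.uIcc_of_le hpi]
    apply ContinuousOn.mul _ (by fun_prop)
    apply ContinuousOn.rpow_const (by fun_prop)
    intro x hx; left; have := hx.1; linarith
  have i1 : IntervalIntegrable (fun t : ℝ => α * (Real.sin t / t)) MeasureTheory.volume 1 π :=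
    c.intervalIntegrable.const_mul α
  have i2 : IntervalIntegrable (fun t : ℝ => β * Real.sin t) MeasureTheory.volume 1 π := by
    apply Continuous.intervalIntegrable; fun_prop
  calc ∫ t in (1:ℝ)..π, t ^ (σ - 1) * Real.sin t
      ≤ ∫ t in (1:ℝ)..π, (α * (Real.sin t / t) + β * Real.sin t) := by
        apply intervalIntegral.integral_mono_on hpi c2.intervalIntegrable (i1.add i2)
        intro t ht
        have hs : 0 ≤ Real.sin t := Real.sin_nonneg_of_nonneg_of_le_pi (by linarith [ht.1]) ht.2
        have ht0 : 0 < t := by linarith [ht.1]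
        rw [Real.rpow_sub_one ht0.ne']
        calc t ^ σ / t * Real.sin t ≤ (α + β * t) / t * Real.sin t := by
              gcongr; exact h t ht.1
          _ = _ := by field_simp
    _ = α * (∫ t in (1:ℝ)..π, Real.sin t / t) + β * ∫ t in (1:ℝ)..π, Real.sin t := by
        rw [intervalIntegral.integral_add i1 i2, intervalIntegral.integral_const_mul,
          intervalIntegral.integral_const_mul]
    _ ≤ _ := add_le_add (mul_le_mul_of_nonneg_left Gzero hα) (mul_le_mul_of_nonneg_left Gone hβ)

lemma Ga (σ : ℝ) (h0 : 0 ≤ σ) (h1 : σ ≤ 1/2) :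
    ∫ t in (1:ℝ)..π, t ^ (σ - 1) * Real.sin t ≤ 0.9082 + 0.54924 * σ := by
  refine (Ggen σ (1 - 0.7 * σ) (σ * (10 / 13)) (by linarith) (by positivity)
    (fun t ht => rpow_lin_a t σ ht h0 h1)).trans ?_
  nlinarith

lemma Gb (σ : ℝ) (h0 : 1/2 ≤ σ) (h1 : σ ≤ 1) :
    ∫ t in (1:ℝ)..π, t ^ (σ - 1) * Real.sin t ≤ 1.18282 + 0.71516 * (σ - 1/2) := by
  refine (Ggen σ _ _ (by nlinarith) (by
    have : 0 ≤ (1 - σ) * (10 / 13) := mul_nonneg (by linarith) (by norm_num)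
    linarith) (fun t ht => rpow_lin_b t σ ht h0 h1)).trans ?_
  nlinarith

/-! The real method -/
lemma osc_upper (f f' : ℝ → ℝ) (hf : ∀ t, 1 ≤ t → HasDerivAt f (f' t) t)
    (hf' : ∀ t, 1 ≤ t → f' t ≤ 0) (h0 : ∀ t, 1 ≤ t → 0 ≤ f t) (T : ℝ) (hT : π ≤ T) :
    ∫ t in π..T, f t * Real.sin t ≤ 0 := by
  have hpi : (1:ℝ) ≤ π := by have := Real.pi_gt_three; linarith
  have hc : ContinuousOn f (Set.Icc π T) := fun t ht =>
    (hf t (hpi.trans ht.1)).continuousAt.continuousWithinAt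
  have := intervalIntegral.integral_le_sub_of_hasDeriv_right_of_le (a := π) (b := T)
    (g := fun t => -(f t * (1 + Real.cos t)))
    (g' := fun t => -(f' t * (1 + Real.cos t) + f t * (-Real.sin t)))
    (φ := fun t => f t * Real.sin t) hT ?_ ?_ ?_ ?_
  · refine this.trans ?_
    have h1 := h0 T (hpi.trans hT)
    have h2 := Real.neg_one_le_cos T
    simp only [Real.cos_pi]
    have : 0 ≤ f T * (1 + Real.cos T) := mul_nonneg h1 (by linarith)
    linarith
  · apply ContinuousOn.neg
    exact hc.mul (by fun_prop)
  · intro x hx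
    have hx1 : 1 ≤ x := hpi.trans hx.1.le
    exact ((hf x hx1).mul ((Real.hasDerivAt_cos x).const_add 1)).neg.hasDerivWithinAt
  · apply ContinuousOn.integrableOn_Icc
    exact hc.mul (by fun_prop)
  · intro x hx
    have hx1 : 1 ≤ x := hpi.trans hx.1.le
    have h2 := Real.neg_one_le_cos x
    have : f' x * (1 + Real.cos x) ≤ 0 := mul_nonpos_of_nonpos_of_nonneg (hf' x hx1) (by linarith)
    linarith

lemma osc_lower (f f' : ℝ → ℝ) (hf : ∀ t, 1 ≤ t → HasDerivAt f (f' t) t)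
    (hf' : ∀ t, 1 ≤ t → f' t ≤ 0) (h0 : ∀ t, 1 ≤ t → 0 ≤ f t) (T : ℝ) (hT : 1 ≤ T) :
    -(f 1 * (1 - Real.cos 1)) ≤ ∫ t in (1:ℝ)..T, f t * Real.sin t := by
  have hc : ContinuousOn f (Set.Icc 1 T) := fun t ht =>
    (hf t ht.1).continuousAt.continuousWithinAt
  have := intervalIntegral.sub_le_integral_of_hasDeriv_right_of_le (a := 1) (b := T)
    (g := fun t => (f t * (1 - Real.cos t)))
    (g' := fun t => (f' t * (1 - Real.cos t) + f t * (- -Real.sin t)))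
    (φ := fun t => f t * Real.sin t) hT ?_ ?_ ?_ ?_
  · refine le_trans ?_ this
    have h1 := h0 T hT
    have h2 := Real.cos_le_one T
    have : 0 ≤ f T * (1 - Real.cos T) := mul_nonneg h1 (by linarith)
    linarith
  · exact hc.mul (by fun_prop)
  · intro x hx
    exact ((hf x hx.1.le).mul ((Real.hasDerivAt_cos x).const_sub 1)).hasDerivWithinAt
  · apply ContinuousOn.integrableOn_Icc
    exact hc.mul (by fun_prop)
  · intro x hx
    have h2 := Real.cos_le_one x
    have : f' x * (1 - Real.cos x) ≤ 0 :=
      mul_nonpos_of_nonpos_of_nonneg (hf' x hx.1.le) (by linarith)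
    linarith

lemma exp_neg_one_le : Real.exp (-1) ≤ 0.36788 := by
  have := Real.exp_one_gt_d9
  rw [Real.exp_neg, inv_le_comm₀ (Real.exp_pos 1) (by norm_num)]
  norm_num at this ⊢
  linarith

/-- the base integral -/
noncomputable def JJ (a s : ℝ) : ℝ :=
  ∫ t in Set.Ioi (0:ℝ), t ^ (s - 1) * Real.exp (-t ^ a) * Real.sin t

lemma JJ_integrable (a s : ℝ) (ha : 0 < a) (hs : 0 < s) :
    MeasureTheory.IntegrableOn (fun t : ℝ => t ^ (s - 1) * Real.exp (-t ^ a) * Real.sin t)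
      (Set.Ioi 0) := by
  have h := integrableOn_rpow_mul_exp_neg_rpow (p := a) (s := s - 1) (by linarith) ha
  refine MeasureTheory.Integrable.mono h ?_ ?_
  · exact h.aestronglyMeasurable.mul (by fun_prop)
  · filter_upwards with t
    rw [norm_mul]
    exact mul_le_of_le_one_right (norm_nonneg _) (by simpa using Real.abs_sin_le_one t)

lemma JJ_unit (a s : ℝ) (ha : 0 < a) (ha1 : a < 1) (hs : 0 < s) :
    ∫ t in (0:ℝ)..1, t ^ (s - 1) * Real.exp (-t ^ a) * Real.sin t ≤ PP s := by
  have hi : IntervalIntegrable (fun t : ℝ => t ^ (s - 1) * Real.exp (-t ^ a) * Real.sin t)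
      MeasureTheory.volume 0 1 := by
    rw [intervalIntegrable_iff_integrableOn_Ioc_of_le zero_le_one]
    exact (JJ_integrable a s ha hs).mono_set Set.Ioc_subset_Ioi_self
  have j0 : IntervalIntegrable (fun t : ℝ => t ^ s) MeasureTheory.volume 0 1 :=
    intervalIntegral.intervalIntegrable_rpow' (by linarith)
  have j1 : IntervalIntegrable (fun t : ℝ => t ^ (s + 1)) MeasureTheory.volume 0 1 :=
    intervalIntegral.intervalIntegrable_rpow' (by linarith)
  have j2 : IntervalIntegrable (fun t : ℝ => t ^ (s + 2) / 3) MeasureTheory.volume 0 1 :=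
    (intervalIntegral.intervalIntegrable_rpow' (by linarith)).div_const 3
  have e : ∫ t in (0:ℝ)..1, (t ^ s - t ^ (s + 1) + t ^ (s + 2) / 3) = PP s := by
    rw [intervalIntegral.integral_add (j0.sub j1) j2, intervalIntegral.integral_sub j0 j1,
      intervalIntegral.integral_div, integral_rpow (by left; linarith),
      integral_rpow (by left; linarith), integral_rpow (by left; linarith)]
    simp only [Real.one_rpow, PP]
    rw [Real.zero_rpow (by linarith), Real.zero_rpow (by linarith), Real.zero_rpow (by linarith)]
    rw [show s + 1 + 1 = s + 2 by ring, show s + 2 + 1 = s + 3 by ring]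
    field_simp
    ring
  rw [← e]
  apply intervalIntegral.integral_mono_on_of_le_Ioo zero_le_one hi ((j0.sub j1).add j2)
  intro t ht
  have h1 : t ≤ t ^ a := by
    have := Real.rpow_le_rpow_of_exponent_ge ht.1 ht.2.le ha1.le
    rwa [Real.rpow_one] at this
  have hs0 : 0 ≤ Real.sin t := Real.sin_nonneg_of_nonneg_of_le_pi ht.1.le
    (by linarith [Real.pi_gt_three, ht.2])
  calc t ^ (s - 1) * Real.exp (-t ^ a) * Real.sin t
      ≤ t ^ (s - 1) * Real.exp (-t) * Real.sin t := by
        have : 0 ≤ t ^ (s - 1) := Real.rpow_nonneg ht.1.le _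
        gcongr
    _ = t ^ (s - 1) * (Real.exp (-t) * Real.sin t) := by ring
    _ ≤ t ^ (s - 1) * (t - t^2 + t^3/3) :=
        mul_le_mul_of_nonneg_left (expsin t ht.1.le ht.2.le) (Real.rpow_nonneg ht.1.le _)
    _ = _ := by
        rw [Real.rpow_sub_one ht.1.ne', Real.rpow_add ht.1, Real.rpow_add ht.1, Real.rpow_one,
          Real.rpow_two]
        have := ht.1.ne'
        field_simp

lemma JJ_mid (h a s : ℝ) (hh : 0 < h) (ha : h ≤ a) :
    ∫ t in (1:ℝ)..π, t ^ (s - 1) * Real.exp (-t ^ a) * Real.sin t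
      ≤ Real.exp (-1) * ∫ t in (1:ℝ)..π, t ^ (s - h - 1) * Real.sin t := by
  have hpi : (1:ℝ) ≤ π := by have := Real.pi_gt_three; linarith
  have cr : ∀ σ : ℝ, ContinuousOn (fun t : ℝ => t ^ σ) (Set.uIcc 1 π) := by
    intro σ
    rw [Set.uIcc_of_le hpi]
    apply ContinuousOn.rpow_const (by fun_prop)
    intro x hx; left; have := hx.1; linarith
  rw [← intervalIntegral.integral_const_mul]
  apply intervalIntegral.integral_mono_on hpi
  · apply ContinuousOn.intervalIntegrable
    exact ((cr _).mul (Real.continuous_exp.comp_continuousOn (cr a).neg)).mul (by fun_prop)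
  · apply ContinuousOn.intervalIntegrable
    exact continuousOn_const.mul ((cr _).mul (by fun_prop))
  · intro t ht
    have ht0 : 0 < t := by linarith [ht.1]
    have hs0 : 0 ≤ Real.sin t := Real.sin_nonneg_of_nonneg_of_le_pi ht0.le ht.2
    have h1 : t ^ h ≤ t ^ a := Real.rpow_le_rpow_of_exponent_le ht.1 ha
    have h2 : 1 + h * Real.log t ≤ t ^ h := by
      rw [Real.rpow_def_of_pos ht0]
      have := Real.add_one_le_exp (Real.log t * h)
      linarith
    have h3 : Real.exp (-t ^ a) ≤ Real.exp (-1) * t ^ (-h) := by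
      rw [Real.rpow_def_of_pos ht0 (-h), ← Real.exp_add]
      apply Real.exp_le_exp.2
      linarith
    calc t ^ (s - 1) * Real.exp (-t ^ a) * Real.sin t
        ≤ t ^ (s - 1) * (Real.exp (-1) * t ^ (-h)) * Real.sin t := by gcongr
      _ = Real.exp (-1) * ((t ^ (s - 1) * t ^ (-h)) * Real.sin t) := by ring
      _ = _ := by
        rw [← Real.rpow_add ht0]
        ring_nf

lemma JJ_real (h a s : ℝ) (hh : 0 < h) (ha : h < a) (ha1 : a < 1) (hs : 0 < s)
    (h0 : 0 ≤ s - h) (h1 : s - h ≤ 1) (M : ℝ) (hM0 : 0.9 ≤ M)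
    (hM : ∫ t in (1:ℝ)..π, t ^ (s - h - 1) * Real.sin t ≤ M) :
    |JJ a s| ≤ PP s + 0.36788 * M := by
  have ha0 : 0 < a := hh.trans ha
  have hpi : (1:ℝ) ≤ π := by have := Real.pi_gt_three; linarith
  set f : ℝ → ℝ := fun t => t ^ (s - 1) * Real.exp (-t ^ a) with hf
  set f' : ℝ → ℝ := fun t => ((s - 1) * t ^ (s - 1 - 1)) * Real.exp (-t ^ a) +
    t ^ (s - 1) * (Real.exp (-t ^ a) * (-(a * t ^ (a - 1)))) with hf'
  have hd : ∀ t, 1 ≤ t → HasDerivAt f (f' t) t := by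
    intro t ht
    have ht0 : t ≠ 0 := by linarith
    exact (Real.hasDerivAt_rpow_const (Or.inl ht0)).mul
      ((Real.hasDerivAt_rpow_const (Or.inl ht0)).neg.exp)
  have hn : ∀ t, 1 ≤ t → f' t ≤ 0 := by
    intro t ht
    have ht0 : 0 < t := by linarith
    have e : f' t = t ^ (s - 1) / t * Real.exp (-t ^ a) * ((s - 1) - a * t ^ a) := by
      simp only [hf']
      rw [Real.rpow_sub_one ht0.ne' (s - 1), Real.rpow_sub_one ht0.ne' a]
      field_simp
      ring
    rw [e]
    apply mul_nonpos_of_nonneg_of_nonpos (by positivity)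
    have : 1 ≤ t ^ a := Real.one_le_rpow ht ha0.le
    nlinarith
  have hp : ∀ t, 1 ≤ t → 0 ≤ f t := by
    intro t ht
    have ht0 : 0 < t := by linarith
    simp only [hf]; positivity
  have hi := JJ_integrable a s ha0 hs
  have hii : ∀ u v : ℝ, 0 ≤ u → u ≤ v →
      IntervalIntegrable (fun t => f t * Real.sin t) MeasureTheory.volume u v := by
    intro u v hu huv
    rw [intervalIntegrable_iff_integrableOn_Ioc_of_le huv]
    exact hi.mono_set (fun x hx => lt_of_le_of_lt hu hx.1)
  have hlim : Filter.Tendsto (fun T => ∫ t in (0:ℝ)..T, f t * Real.sin t) Filter.atTop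
      (nhds (JJ a s)) :=
    MeasureTheory.intervalIntegral_tendsto_integral_Ioi 0 hi Filter.tendsto_id
  have hu := JJ_unit a s ha0 ha1 hs
  have hm := JJ_mid h a s hh ha.le
  have hu0 : 0 ≤ ∫ t in (0:ℝ)..1, f t * Real.sin t := by
    apply intervalIntegral.integral_nonneg zero_le_one
    intro t ht
    have : 0 ≤ Real.sin t := Real.sin_nonneg_of_nonneg_of_le_pi ht.1 (by linarith [ht.2])
    have : 0 ≤ f t := by
      simp only [hf]; exact mul_nonneg (Real.rpow_nonneg ht.1 _) (Real.exp_pos _).le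
    positivity
  have he := exp_neg_one_le
  have he0 := Real.exp_pos (-1)
  have upper : JJ a s ≤ PP s + 0.36788 * M := by
    apply le_of_tendsto hlim
    filter_upwards [Filter.eventually_ge_atTop π] with T hT
    rw [← intervalIntegral.integral_add_adjacent_intervals (hii 0 1 le_rfl zero_le_one)
      (hii 1 T zero_le_one (hpi.trans hT)),
      ← intervalIntegral.integral_add_adjacent_intervals (hii 1 π zero_le_one hpi)
      (hii π T (by linarith) hT)]
    have h3 := osc_upper f f' hd hn hp T hT
    have h4 : Real.exp (-1) * ∫ t in (1:ℝ)..π, t ^ (s - h - 1) * Real.sin t ≤ 0.36788 * M :=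
      calc _ ≤ Real.exp (-1) * M := mul_le_mul_of_nonneg_left hM he0.le
        _ ≤ _ := mul_le_mul_of_nonneg_right he (by linarith)
    have := hm.trans h4
    linarith
  have lower : -(Real.exp (-1) * (1 - Real.cos 1)) ≤ JJ a s := by
    apply ge_of_tendsto hlim
    filter_upwards [Filter.eventually_ge_atTop 1] with T hT
    rw [← intervalIntegral.integral_add_adjacent_intervals (hii 0 1 le_rfl zero_le_one)
      (hii 1 T zero_le_one hT)]
    have h3 := osc_lower f f' hd hn hp T hT
    have e1 : f 1 = Real.exp (-1) := by simp [hf]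
    rw [e1] at h3
    linarith
  rw [abs_le]
  refine ⟨?_, upper⟩
  have hc := tay1 1 zero_le_one
  have hPP := PP_pos s hs
  nlinarith

/-! Rotation of the contour -/
lemma exp_image : Real.exp '' Set.univ = Set.Ioi 0 := by
  rw [Set.image_univ, Real.range_exp]

lemma cov_integral (g : ℝ → ℝ) : ∫ y in Set.Ioi (0:ℝ), g y = ∫ x : ℝ, Real.exp x * g (Real.exp x) := by
  rw [← exp_image, MeasureTheory.integral_image_eq_integral_abs_deriv_smul MeasurableSet.univ
    (fun x _ => (Real.hasDerivAt_exp x).hasDerivWithinAt) Real.exp_injective.injOn]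
  simp [abs_of_pos (Real.exp_pos _)]

lemma cov_integrable (g : ℝ → ℝ) (hg : MeasureTheory.IntegrableOn g (Set.Ioi 0)) :
    MeasureTheory.Integrable (fun x => Real.exp x * g (Real.exp x)) := by
  rw [← exp_image, MeasureTheory.integrableOn_image_iff_integrableOn_abs_deriv_smul MeasurableSet.univ
    (fun x _ => (Real.hasDerivAt_exp x).hasDerivWithinAt) Real.exp_injective.injOn] at hg
  simpa [abs_of_pos (Real.exp_pos _)] using hg

lemma FF_re (a s x y : ℝ) : ((s : ℂ) * (x + y * Complex.I) - Complex.exp (a * (x + y * Complex.I)) +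
    Complex.I * Complex.exp (x + y * Complex.I)).re =
    s * x - Real.exp (a * x) * Real.cos (a * y) - Real.exp x * Real.sin y := by
  simp [Complex.exp_re, Complex.exp_im]
  ring

lemma FF_im0 (a s x : ℝ) : (Complex.exp ((s : ℂ) * x - Complex.exp (a * x) +
    Complex.I * Complex.exp x)).im =
    Real.exp (s * x - Real.exp (a * x)) * Real.sin (Real.exp x) := by
  have e : (s : ℂ) * x - Complex.exp (a * x) + Complex.I * Complex.exp x =
    ((s * x - Real.exp (a * x) : ℝ) : ℂ) + (Real.exp x : ℝ) * Complex.I := by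
    push_cast; ring
  have e1 : (((s * x - Real.exp (a * x) : ℝ) : ℂ) + (Real.exp x : ℝ) * Complex.I).re =
      s * x - Real.exp (a * x) := by
    rw [Complex.add_re, Complex.ofReal_re, Complex.re_ofReal_mul, Complex.I_re]; ring
  have e2 : (((s * x - Real.exp (a * x) : ℝ) : ℂ) + (Real.exp x : ℝ) * Complex.I).im =
      Real.exp x := by
    rw [Complex.add_im, Complex.ofReal_im, Complex.im_ofReal_mul, Complex.I_im]; ring
  rw [e, Complex.exp_im, e1, e2]

lemma side_lim (a s c : ℝ) (ha : 0 < a) (hc : 0 < c) :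
    Filter.Tendsto (fun T : ℝ => Real.exp (s * T - Real.exp (a * T) * c)) Filter.atTop (nhds 0) := by
  have h := tendsto_rpow_mul_exp_neg_mul_atTop_nhds_zero (s / a) c hc
  have h2 : Filter.Tendsto (fun T : ℝ => Real.exp (a * T)) Filter.atTop Filter.atTop :=
    Real.tendsto_exp_atTop.comp (Filter.tendsto_id.const_mul_atTop ha)
  refine (h.comp h2).congr (fun T => ?_)
  simp only [Function.comp]
  rw [← Real.exp_mul, ← Real.exp_add]
  congr 1
  field_simp
  ring

lemma side_lim2 (s : ℝ) (hs : 0 < s) :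
    Filter.Tendsto (fun T : ℝ => Real.exp (-(s * T))) Filter.atTop (nhds 0) :=
  Real.tendsto_exp_neg_atTop_nhds_zero.comp (Filter.tendsto_id.const_mul_atTop hs)

lemma rot (a s θ : ℝ) (ha : 0 < a) (ha1 : a < 1) (hs : 0 < s) (h0 : 0 ≤ θ) (h1 : θ ≤ π / 2) :
    MeasureTheory.IntegrableOn (fun y : ℝ => y ^ (s - 1) *
      Real.exp (-(y ^ a * Real.cos (a * θ)) - y * Real.sin θ)) (Set.Ioi 0) ∧
    |JJ a s| ≤ ∫ y in Set.Ioi (0:ℝ), y ^ (s - 1) *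
      Real.exp (-(y ^ a * Real.cos (a * θ)) - y * Real.sin θ) := by
  have hpi := Real.pi_pos
  have hcos : ∀ y, 0 ≤ y → y ≤ π / 2 → Real.cos (a * (π / 2)) ≤ Real.cos (a * y) := by
    intro y hy hy1
    apply Real.cos_le_cos_of_nonneg_of_le_pi (by positivity) (by nlinarith)
    exact mul_le_mul_of_nonneg_left hy1 ha.le
  have hc : 0 < Real.cos (a * (π / 2)) := Real.cos_pos_of_mem_Ioo ⟨by nlinarith, by nlinarith⟩
  have hsin : ∀ y, 0 ≤ y → y ≤ π / 2 → 0 ≤ Real.sin y := fun y hy hy1 =>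
    Real.sin_nonneg_of_nonneg_of_le_pi hy (by linarith)
  have hcθ : 0 < Real.cos (a * θ) := hc.trans_le (hcos θ h0 h1)
  set K : ℝ → ℝ := fun y : ℝ => y ^ (s - 1) *
      Real.exp (-(y ^ a * Real.cos (a * θ)) - y * Real.sin θ) with hK
  have hKi : MeasureTheory.IntegrableOn K (Set.Ioi 0) := by
    have h := integrableOn_rpow_mul_exp_neg_mul_rpow (p := a) (s := s - 1) (b := Real.cos (a * θ))
      (by linarith) ha hcθ
    refine MeasureTheory.Integrable.mono h ?_ ?_
    · apply Measurable.aestronglyMeasurable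
      fun_prop
    · rw [MeasureTheory.ae_restrict_iff' measurableSet_Ioi]
      filter_upwards with t ht
      have ht0 : (0:ℝ) < t := ht
      simp only [hK]
      rw [norm_mul, norm_mul]
      apply mul_le_mul_of_nonneg_left _ (norm_nonneg _)
      rw [Real.norm_of_nonneg (Real.exp_pos _).le, Real.norm_of_nonneg (Real.exp_pos _).le]
      apply Real.exp_le_exp.2
      have := mul_nonneg ht0.le (hsin θ h0 h1)
      linarith
  refine ⟨hKi, ?_⟩
  -- the exponential form
  have eK : ∀ x : ℝ, Real.exp x * K (Real.exp x) =
      Real.exp (s * x - Real.exp (a * x) * Real.cos (a * θ) - Real.exp x * Real.sin θ) := by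
    intro x
    simp only [hK]
    rw [← Real.exp_mul, ← Real.exp_mul, ← Real.exp_add, ← Real.exp_add]
    congr 1
    rw [mul_comm x a]
    ring
  have eJ : ∀ x : ℝ, Real.exp x * (Real.exp x ^ (s - 1) * Real.exp (-Real.exp x ^ a) *
      Real.sin (Real.exp x)) = Real.exp (s * x - Real.exp (a * x)) * Real.sin (Real.exp x) := by
    intro x
    rw [← mul_assoc, ← mul_assoc, ← Real.exp_mul, ← Real.exp_mul, ← Real.exp_add, ← Real.exp_add]
    congr 2
    rw [mul_comm x a]
    ring
  have hKe := cov_integrable K hKi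
  have hJe := cov_integrable _ (JJ_integrable a s ha hs)
  simp only [eK] at hKe
  simp only [eJ] at hJe
  rw [cov_integral K]
  unfold JJ
  rw [cov_integral]
  simp only [eK, eJ]
  set KT := ∫ x : ℝ, Real.exp (s * x - Real.exp (a * x) * Real.cos (a * θ) -
    Real.exp x * Real.sin θ) with hKT
  set F : ℂ → ℂ := fun w => Complex.exp (s * w - Complex.exp (a * w) + Complex.I * Complex.exp w)
    with hF
  have nF : ∀ x y : ℝ, ‖F (x + y * Complex.I)‖ =
      Real.exp (s * x - Real.exp (a * x) * Real.cos (a * y) - Real.exp x * Real.sin y) := by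
    intro x y
    simp only [hF]
    rw [Complex.norm_exp, FF_re]
  have cF : Continuous F := by simp only [hF]; fun_prop
  have dF : Differentiable ℂ F := by simp only [hF]; fun_prop
  have key : ∀ T : ℝ, 0 ≤ T → |∫ x in (-T)..T, Real.exp (s * x - Real.exp (a * x)) *
      Real.sin (Real.exp x)| ≤ KT + Real.exp (s * T - Real.exp (a * T) * Real.cos (a * (π / 2))) * |θ - 0|
        + Real.exp (-(s * T)) * |θ - 0| := by
    intro T hT
    have r := Complex.integral_boundary_rect_eq_zero_of_differentiableOn F ((-T : ℝ) : ℂ)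
      ((T : ℝ) + (θ : ℝ) * Complex.I) dF.differentiableOn
    have z1 : (((-T : ℝ) : ℂ)).re = -T := by simp
    have z2 : (((-T : ℝ) : ℂ)).im = 0 := by simp
    have z3 : (((T : ℝ) : ℂ) + (θ : ℝ) * Complex.I).re = T := by simp
    have z4 : (((T : ℝ) : ℂ) + (θ : ℝ) * Complex.I).im = θ := by simp
    rw [z1, z2, z3, z4] at r
    have b1 : ‖∫ x in (-T)..T, F (x + θ * Complex.I)‖ ≤ KT := by
      refine (intervalIntegral.norm_integral_le_integral_norm (by linarith)).trans ?_
      simp only [nF]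
      rw [intervalIntegral.integral_of_le (by linarith), hKT]
      apply MeasureTheory.setIntegral_le_integral hKe
      filter_upwards with x
      exact (Real.exp_pos _).le
    have b2 : ‖∫ y in (0:ℝ)..θ, F (T + y * Complex.I)‖ ≤
        Real.exp (s * T - Real.exp (a * T) * Real.cos (a * (π / 2))) * |θ - 0| := by
      apply intervalIntegral.norm_integral_le_of_norm_le_const
      intro y hy
      rw [Set.uIoc_of_le h0] at hy
      rw [nF]
      apply Real.exp_le_exp.2
      have q1 := hcos y hy.1.le (hy.2.trans h1)
      have q2 := mul_nonneg (Real.exp_pos T).le (hsin y hy.1.le (hy.2.trans h1))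
      have q3 := mul_le_mul_of_nonneg_left q1 (Real.exp_pos (a * T)).le
      linarith
    have b3 : ‖∫ y in (0:ℝ)..θ, F ((-T : ℝ) + y * Complex.I)‖ ≤
        Real.exp (-(s * T)) * |θ - 0| := by
      apply intervalIntegral.norm_integral_le_of_norm_le_const
      intro y hy
      rw [Set.uIoc_of_le h0] at hy
      rw [nF]
      apply Real.exp_le_exp.2
      have q1 := hcos y hy.1.le (hy.2.trans h1)
      have q2 := mul_nonneg (Real.exp_pos (-T)).le (hsin y hy.1.le (hy.2.trans h1))
      have q3 := mul_le_mul_of_nonneg_left (hc.le.trans q1) (Real.exp_pos (a * -T)).le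
      linarith
    have im : ∫ x in (-T)..T, Real.exp (s * x - Real.exp (a * x)) * Real.sin (Real.exp x) =
        (∫ x in (-T)..T, F (x + (0:ℝ) * Complex.I)).im := by
      have hcomm := Complex.imCLM.intervalIntegral_comp_comm (a := -T) (b := T)
        (μ := MeasureTheory.volume) (f := fun x : ℝ => F (x + (0:ℝ) * Complex.I))
        (by apply Continuous.intervalIntegrable; fun_prop)
      simp only [Complex.imCLM_apply] at hcomm
      rw [← hcomm]
      congr 1
      ext x
      simp only [hF, Complex.ofReal_zero, zero_mul, add_zero]
      rw [FF_im0]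
    rw [im]
    refine (Complex.abs_im_le_norm _).trans ?_
    have e : ∫ x in (-T)..T, F (x + (0:ℝ) * Complex.I) =
        (∫ x in (-T)..T, F (x + θ * Complex.I)) - Complex.I • (∫ y in (0:ℝ)..θ, F (T + y * Complex.I))
        + Complex.I • ∫ y in (0:ℝ)..θ, F ((-T : ℝ) + y * Complex.I) := by
      linear_combination r
    rw [e]
    refine (norm_add_le _ _).trans (add_le_add ((norm_sub_le _ _).trans (add_le_add b1 ?_)) ?_)
    · rw [norm_smul, Complex.norm_I, one_mul]; exact b2
    · rw [norm_smul, Complex.norm_I, one_mul]; exact b3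
  have lim1 : Filter.Tendsto (fun T : ℝ => ∫ x in (-T)..T, Real.exp (s * x - Real.exp (a * x)) *
      Real.sin (Real.exp x)) Filter.atTop (nhds (∫ x, Real.exp (s * x - Real.exp (a * x)) *
      Real.sin (Real.exp x))) :=
    MeasureTheory.intervalIntegral_tendsto_integral hJe Filter.tendsto_neg_atTop_atBot
      Filter.tendsto_id
  have lim2 := ((((side_lim a s _ ha hc).mul_const |θ - 0|).const_add KT).add
    ((side_lim2 s hs).mul_const |θ - 0|))
  simp only [zero_mul, add_zero] at lim2
  refine le_of_tendsto_of_tendsto lim1.abs lim2 ?_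
  filter_upwards [Filter.eventually_ge_atTop 0] with T hT
  have := key T hT
  simpa only [sub_zero] using this

lemma JJ_gamma (a s : ℝ) (ha : 0 < a) (ha1 : a < 1) (hs : 0 < s) : |JJ a s| ≤ Real.Gamma s := by
  have hpi := Real.pi_pos
  obtain ⟨hi, hb⟩ := rot a s (π / 2) ha ha1 hs (by positivity) le_rfl
  refine hb.trans ?_
  rw [Real.Gamma_eq_integral hs]
  apply MeasureTheory.setIntegral_mono_on hi (Real.GammaIntegral_convergent hs) measurableSet_Ioi
  intro y hy
  have hy0 : (0:ℝ) < y := hy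
  have hc : 0 < Real.cos (a * (π / 2)) := Real.cos_pos_of_mem_Ioo ⟨by nlinarith, by nlinarith⟩
  rw [mul_comm]
  apply mul_le_mul_of_nonneg_right _ (Real.rpow_nonneg hy0.le _)
  apply Real.exp_le_exp.2
  rw [Real.sin_pi_div_two]
  have := mul_nonneg (Real.rpow_nonneg hy0.le a) hc.le
  linarith

lemma cos_third (a : ℝ) (ha : 0 < a) (ha1 : a < 1) : (1/2:ℝ) ^ a ≤ Real.cos (a * (π / 3)) := by
  have h1 := rpow_one_add_le_one_add_mul_self (s := -(1/2)) (by norm_num) ha.le ha1.le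
  rw [show (1:ℝ) + -(1/2) = 1/2 by norm_num] at h1
  have hpi := Real.pi_pos
  have m1 : (0:ℝ) ∈ Set.Icc (-(π/2)) (π/2) := ⟨by linarith, by linarith⟩
  have m2 : π / 3 ∈ Set.Icc (-(π/2)) (π/2) := ⟨by linarith, by linarith⟩
  have h2 := strictConcaveOn_cos_Icc.concaveOn.2 m1 m2 (sub_nonneg.2 ha1.le) ha.le
    (sub_add_cancel 1 a)
  simp only [smul_eq_mul, mul_zero, zero_add, Real.cos_zero, Real.cos_pi_div_three] at h2
  linarith

/-- antiderivative polynomial -/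
noncomputable def HH (b c0 c1 c2 y : ℝ) : ℝ :=
  (c0 + c1 * y + c2 * y ^ 2) / b + (c1 + 2 * c2 * y) / b ^ 2 + 2 * c2 / b ^ 3

lemma HH_deriv (b c0 c1 c2 y : ℝ) (hb : 0 < b) :
    HasDerivAt (fun y => -(HH b c0 c1 c2 y * Real.exp (-(b * y))))
      ((c0 + c1 * y + c2 * y ^ 2) * Real.exp (-(b * y))) y := by
  have d1 := ((hasDerivAt_id' y).const_mul c1).const_add c0
  have d2 := (hasDerivAt_pow 2 y).const_mul c2
  have d3 := ((hasDerivAt_id' y).const_mul (2 * c2)).const_add c1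
  have dH := (((d1.add d2).div_const b).add (d3.div_const (b ^ 2))).add_const (2 * c2 / b ^ 3)
  have dE := ((hasDerivAt_id' y).const_mul b).neg.exp
  refine ((dH.mul dE).neg).congr_deriv ?_
  simp only [Pi.add_apply, Pi.neg_apply]
  push_cast
  field_simp
  ring

lemma HH_lim (b c0 c1 c2 : ℝ) (hb : 0 < b) :
    Filter.Tendsto (fun y => -(HH b c0 c1 c2 y * Real.exp (-(b * y)))) Filter.atTop (nhds 0) := by
  have l0 := tendsto_rpow_mul_exp_neg_mul_atTop_nhds_zero 0 b hb
  have l1 := tendsto_rpow_mul_exp_neg_mul_atTop_nhds_zero 1 b hb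
  have l2 := tendsto_rpow_mul_exp_neg_mul_atTop_nhds_zero 2 b hb
  have l := ((l0.const_mul (c0 / b + c1 / b ^ 2 + 2 * c2 / b ^ 3)).add
    ((l1.const_mul (c1 / b + 2 * c2 / b ^ 2)).add (l2.const_mul (c2 / b)))).neg
  simp only [mul_zero, add_zero, neg_zero] at l
  refine l.congr (fun y => ?_)
  rw [Real.rpow_zero, Real.rpow_one, Real.rpow_two, neg_mul]
  unfold HH
  ring

lemma HH_Ioi (b c0 c1 c2 : ℝ) (hb : 0 < b) (h0 : 0 ≤ c0) (h1 : 0 ≤ c1) (h2 : 0 ≤ c2) :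
    MeasureTheory.IntegrableOn (fun y => (c0 + c1 * y + c2 * y ^ 2) * Real.exp (-(b * y))) (Set.Ioi 2) ∧
    ∫ y in Set.Ioi (2:ℝ), (c0 + c1 * y + c2 * y ^ 2) * Real.exp (-(b * y)) =
      HH b c0 c1 c2 2 * Real.exp (-(b * 2)) := by
  have hn : ∀ y ∈ Set.Ioi (2:ℝ), 0 ≤ (c0 + c1 * y + c2 * y ^ 2) * Real.exp (-(b * y)) := by
    intro y hy
    have : (0:ℝ) < y := lt_trans two_pos hy
    positivity
  refine ⟨MeasureTheory.integrableOn_Ioi_deriv_of_nonneg'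
    (fun y _ => HH_deriv b c0 c1 c2 y hb) hn (HH_lim b c0 c1 c2 hb), ?_⟩
  rw [MeasureTheory.integral_Ioi_of_hasDerivAt_of_nonneg'
    (fun y _ => HH_deriv b c0 c1 c2 y hb) hn (HH_lim b c0 c1 c2 hb)]
  ring

lemma HH_Ioc (b c0 c1 c2 : ℝ) (hb : 0 < b) :
    ∫ y in (0:ℝ)..2, (c0 + c1 * y + c2 * y ^ 2) * Real.exp (-(b * y)) =
      HH b c0 c1 c2 0 - HH b c0 c1 c2 2 * Real.exp (-(b * 2)) := by
  rw [intervalIntegral.integral_eq_sub_of_hasDerivAt (fun y _ => HH_deriv b c0 c1 c2 y hb)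
    (by apply Continuous.intervalIntegrable; fun_prop)]
  simp
  ring

lemma exp_num : Real.exp (-2.732) ≤ 0.0651 := by
  have h1 := exp_neg_one_le
  have h2 := Real.exp_bound' (x := 0.268) (by norm_num) (by norm_num) (n := 4) (by norm_num)
  have e : Real.exp (-2.732) = Real.exp (-1) ^ 3 * Real.exp 0.268 := by
    rw [← Real.exp_nat_mul, ← Real.exp_add]
    norm_num
  rw [e]
  have h3 : Real.exp (-1) ^ 3 ≤ 0.36788 ^ 3 := pow_le_pow_left₀ (Real.exp_pos _).le h1 3
  have h4 : Real.exp 0.268 ≤ 1.3075 := by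
    refine h2.trans ?_
    norm_num [Finset.sum_range_succ, Nat.factorial]
  calc _ ≤ (0.36788:ℝ) ^ 3 * 1.3075 := mul_le_mul h3 h4 (Real.exp_pos _).le (by norm_num)
    _ ≤ _ := by norm_num

lemma JJ_third (a s c0 c1 c2 : ℝ) (ha : 0 < a) (ha1 : a < 1) (hs : 0 < s)
    (h0 : 0 ≤ c0) (h1 : 0 ≤ c1) (h2 : 0 ≤ c2)
    (hP : ∀ y : ℝ, 0 < y → y ^ (s - 1) ≤ c0 + c1 * y + c2 * y ^ 2) :
    |JJ a s| ≤ 0.76 * c0 + 0.645 * c1 + 1.26 * c2 := by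
  have hpi := Real.pi_pos
  obtain ⟨hi, hb⟩ := rot a s (π / 3) ha ha1 hs (by positivity) (by linarith)
  refine hb.trans ?_
  have hsin : 0.866 ≤ Real.sin (π / 3) := by
    rw [Real.sin_pi_div_three]
    have : 1.732 ≤ √3 := Real.le_sqrt_of_sq_le (by norm_num)
    linarith
  have hcos := cos_third a ha ha1
  have hya : ∀ y : ℝ, 0 < y → (y / 2) ^ a ≤ y ^ a * Real.cos (a * (π / 3)) := by
    intro y hy
    rw [div_eq_mul_one_div, Real.mul_rpow hy.le (by norm_num)]
    exact mul_le_mul_of_nonneg_left hcos (Real.rpow_nonneg hy.le _)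
  have hPn : ∀ y : ℝ, 0 < y → 0 ≤ c0 + c1 * y + c2 * y ^ 2 := fun y hy => by positivity
  rw [← Set.Ioc_union_Ioi_eq_Ioi (show (0:ℝ) ≤ 2 by norm_num),
    MeasureTheory.setIntegral_union Set.Ioc_disjoint_Ioi_same measurableSet_Ioi
    (hi.mono_set Set.Ioc_subset_Ioi_self) (hi.mono_set (Set.Ioi_subset_Ioi (by norm_num)))]
  obtain ⟨gi, ge⟩ := HH_Ioi 0.866 c0 c1 c2 (by norm_num) h0 h1 h2
  have A1 : ∫ y in Set.Ioc (0:ℝ) 2, y ^ (s - 1) *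
      Real.exp (-(y ^ a * Real.cos (a * (π / 3))) - y * Real.sin (π / 3)) ≤
      HH 1.366 c0 c1 c2 0 - HH 1.366 c0 c1 c2 2 * Real.exp (-(1.366 * 2)) := by
    rw [← HH_Ioc 1.366 c0 c1 c2 (by norm_num), intervalIntegral.integral_of_le (by norm_num)]
    apply MeasureTheory.setIntegral_mono_on (hi.mono_set Set.Ioc_subset_Ioi_self) _
      measurableSet_Ioc
    · intro y hy
      have hy0 : 0 < y := hy.1
      apply mul_le_mul (hP y hy0) _ (Real.exp_pos _).le (hPn y hy0)
      apply Real.exp_le_exp.2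
      have q1 : y / 2 ≤ (y / 2) ^ a := by
        have := Real.rpow_le_rpow_of_exponent_ge (show 0 < y / 2 by linarith)
          (by linarith [hy.2]) ha1.le
        rwa [Real.rpow_one] at this
      have q2 := hya y hy0
      have q3 := mul_le_mul_of_nonneg_left hsin hy0.le
      linarith
    · apply Continuous.integrableOn_Ioc
      fun_prop
  have A2 : ∫ y in Set.Ioi (2:ℝ), y ^ (s - 1) *
      Real.exp (-(y ^ a * Real.cos (a * (π / 3))) - y * Real.sin (π / 3)) ≤
      Real.exp (-1) * (HH 0.866 c0 c1 c2 2 * Real.exp (-(0.866 * 2))) := by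
    rw [← ge, ← MeasureTheory.integral_const_mul]
    apply MeasureTheory.setIntegral_mono_on (hi.mono_set (Set.Ioi_subset_Ioi (by norm_num)))
      (gi.const_mul _) measurableSet_Ioi
    intro y hy
    have hy2 : 2 < y := hy
    have hy0 : 0 < y := by linarith
    rw [mul_left_comm, ← Real.exp_add]
    apply mul_le_mul (hP y hy0) _ (Real.exp_pos _).le (hPn y hy0)
    apply Real.exp_le_exp.2
    have q1 : 1 ≤ (y / 2) ^ a := Real.one_le_rpow (by linarith) ha.le
    have q2 := hya y hy0
    have q3 := mul_le_mul_of_nonneg_left hsin hy0.le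
    linarith
  refine (add_le_add A1 A2).trans ?_
  have e1 : Real.exp (-(1.366 * 2)) = Real.exp (-2.732) := by norm_num
  have e2 : Real.exp (-1) * (HH 0.866 c0 c1 c2 2 * Real.exp (-(0.866 * 2))) =
      HH 0.866 c0 c1 c2 2 * Real.exp (-2.732) := by
    rw [mul_left_comm, ← Real.exp_add]; norm_num
  rw [e1, e2]
  have hE := exp_num
  have hd : 0 ≤ HH 0.866 c0 c1 c2 2 - HH 1.366 c0 c1 c2 2 := by
    unfold HH; norm_num; linarith
  have := mul_le_mul_of_nonneg_left hE hd
  calc _ ≤ HH 1.366 c0 c1 c2 0 + (HH 0.866 c0 c1 c2 2 - HH 1.366 c0 c1 c2 2) * 0.0651 := by linarith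
    _ ≤ _ := by unfold HH; norm_num; linarith

lemma JJ_third_a (a s : ℝ) (ha : 0 < a) (ha1 : a < 1) (hs : 1 ≤ s) (hs2 : s ≤ 2) :
    |JJ a s| ≤ 0.76 * (2 - s) + 0.645 * (s - 1) := by
  have := JJ_third a s (2 - s) (s - 1) 0 ha ha1 (by linarith) (by linarith) (by linarith) le_rfl ?_
  · linarith
  · intro y hy
    have h := Real.geom_mean_le_arith_mean2_weighted (w₁ := 2 - s) (w₂ := s - 1) (p₁ := 1)
      (p₂ := y) (by linarith) (by linarith) zero_le_one hy.le (by ring)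
    rw [Real.one_rpow, one_mul] at h
    linarith

lemma JJ_third_b (a s : ℝ) (ha : 0 < a) (ha1 : a < 1) (hs : 2 ≤ s) (hs2 : s ≤ 3) :
    |JJ a s| ≤ 0.645 * (3 - s) + 1.26 * (s - 2) := by
  have := JJ_third a s 0 (3 - s) (s - 2) ha ha1 (by linarith) le_rfl (by linarith) (by linarith) ?_
  · linarith
  · intro y hy
    have h := Real.geom_mean_le_arith_mean2_weighted (w₁ := 3 - s) (w₂ := s - 2) (p₁ := y)
      (p₂ := y ^ 2) (by linarith) (by linarith) hy.le (by positivity) (by ring)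
    rw [← Real.rpow_two, ← Real.rpow_mul hy.le, ← Real.rpow_add hy, Real.rpow_two] at h
    rw [show 3 - s + 2 * (s - 2) = s - 1 by ring] at h
    linarith

lemma subst_JJ (p q : ℝ) (hp : 1 < p) (hpq : p < q) (k : ℕ) :
    ∫ r in Set.Ioi (0 : ℝ),
          (Real.exp (-r ^ (2 * p) + r ^ 2) * Real.sin (r ^ (2 * q))) *
            Real.exp (-r ^ 2) * r ^ (2 * k + 1) =
      (2 * q)⁻¹ * JJ (p / q) (((k : ℝ) + 1) / q) := by
  have hq : 0 < q := by linarith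
  unfold JJ
  rw [← MeasureTheory.integral_comp_rpow_Ioi_of_pos (p := 2 * q) (by linarith)
    (g := fun t : ℝ => t ^ (((k : ℝ) + 1) / q - 1) * Real.exp (-t ^ (p / q)) * Real.sin t),
    ← MeasureTheory.integral_const_mul]
  apply MeasureTheory.setIntegral_congr_fun measurableSet_Ioi
  intro r hr
  have hr0 : (0:ℝ) < r := hr
  simp only [smul_eq_mul]
  rw [← Real.rpow_mul hr0.le, ← Real.rpow_mul hr0.le]
  have e1 : 2 * q * (p / q) = 2 * p := by field_simp
  have e2 : r ^ (2 * q - 1) * r ^ (2 * q * (((k:ℝ) + 1) / q - 1)) = r ^ (2 * k + 1) := by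
    rw [← Real.rpow_add hr0, ← Real.rpow_natCast]
    congr 1
    push_cast
    field_simp
    ring
  have e3 : Real.exp (-r ^ (2 * p) + r ^ 2) * Real.exp (-r ^ 2) = Real.exp (-r ^ (2 * p)) := by
    rw [← Real.exp_add]; congr 1; ring
  rw [e1, ← e2, ← e3]
  field_simp

lemma main_bound (h a : ℝ) (hh : 0 < h) (ha : h < a) (ha1 : a < 1) (k : ℕ) :
    |JJ a (((k:ℝ) + 1) * h)| * (1 + h / 2) ≤ Real.Gamma (((k:ℝ) + 1) * h + h) := by
  have ha0 : 0 < a := hh.trans ha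
  have hh1 : h < 1 := ha.trans ha1
  have hf : 0 ≤ 1 + h / 2 := by linarith
  have lift : ∀ s B : ℝ, |JJ a s| ≤ B → B * (1 + h / 2) ≤ Real.Gamma (s + h) →
      |JJ a s| * (1 + h / 2) ≤ Real.Gamma (s + h) := fun s B h1 h2 =>
    (mul_le_mul_of_nonneg_right h1 hf).trans h2
  have realA : ∀ s, h ≤ s → s - h ≤ 1/2 →
      |JJ a s| ≤ PP s + 0.36788 * (0.9082 + 0.54924 * (s - h)) := fun s h1 h2 =>
    JJ_real h a s hh ha ha1 (by linarith) (by linarith) (by linarith) _ (by linarith)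
      (Ga (s - h) (by linarith) h2)
  have realB : ∀ s, 1/2 ≤ s - h → s - h ≤ 1 →
      |JJ a s| ≤ PP s + 0.36788 * (1.18282 + 0.71516 * (s - h - 1/2)) := fun s h1 h2 =>
    JJ_real h a s hh ha ha1 (by linarith) (by linarith) (by linarith) _ (by linarith)
      (Gb (s - h) h1 h2)
  have two : ∀ s, 2 ≤ s → 3 * h ≤ s → |JJ a s| * (1 + h / 2) ≤ Real.Gamma (s + h) := by
    intro s h2 h3
    rcases le_total s 3 with hs | hs
    · exact lift s _ (JJ_third_b a s ha0 ha1 h2 hs) (numB2' h s hh h2 hs h3 hh1)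
    · exact lift s _ (JJ_gamma a s ha0 ha1 (by linarith)) (numC h s hh hh1 hs)
  match k with
  | 0 =>
    apply lift _ _ (realA _ (by simp) (by simp))
    have := numA0 h hh hh1
    norm_num
    rw [show h + h = 2 * h by ring]
    norm_num at this
    linarith
  | 1 =>
    have e : (((1:ℕ):ℝ) + 1) * h = 2 * h := by push_cast; ring
    rw [e]
    have e2 : 2 * h - h = h := by ring
    rcases le_total h (1/2) with h2 | h2
    · have r := realA (2 * h) (by linarith) (by linarith)
      have n := numA1a h hh h2
      rw [e2] at r
      exact lift _ _ r (by rwa [show 2 * h + h = 3 * h by ring])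
    · have r := realB (2 * h) (by linarith) (by linarith)
      have n := numA1b h h2 hh1
      rw [e2] at r
      exact lift _ _ r (by rwa [show 2 * h + h = 3 * h by ring])
  | 2 =>
    have e : (((2:ℕ):ℝ) + 1) * h = 3 * h := by push_cast; ring
    rw [e]
    have e2 : 3 * h - h = 2 * h := by ring
    have e3 : 3 * h + h = 4 * h := by ring
    rcases le_total h 0.4 with h4 | h4
    · norm_num at h4
      rcases le_total (2 * h) (1/2) with h2 | h2
      · have r := realA (3 * h) (by linarith) (by linarith)
        have n := numA2a h hh h2
        rw [e2] at r
        exact lift _ _ r (by rwa [e3])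
      · have r := realB (3 * h) (by linarith) (by linarith)
        have n := numA2b h h2 (by linarith)
        rw [e2] at r
        exact lift _ _ r (by rwa [e3])
    · rcases le_total (3 * h) 2 with h2 | h2
      · have n := numB2 h h4 h2
        exact lift _ _ (JJ_third_a a (3 * h) ha0 ha1 (by linarith) h2) (by rwa [e3])
      · exact two _ h2 le_rfl
  | (k + 3) =>
    set s := (((k + 3 : ℕ) : ℝ) + 1) * h with hs
    have h4 : 4 * h ≤ s := by
      rw [hs]; push_cast
      have : 0 ≤ (k:ℝ) * h := by positivity
      linarith
    rcases le_total s 1 with s1 | s1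
    · rcases le_total (s - h) (1/2) with h2 | h2
      · exact lift _ _ (realA s (by linarith) h2) (numA3a s h hh h4 s1 h2)
      · exact lift _ _ (realB s h2 (by linarith)) (numA3b s h hh h4 s1 h2)
    · rcases le_total s 2 with s2 | s2
      · exact lift _ _ (JJ_third_a a s ha0 ha1 s1 s2) (numB3 h s hh s1 s2 h4)
      · exact two _ s2 (by linarith)

theorem stmt15 (p q : ℝ) (hp : 1 < p) (hpq : p < q) :
    ∀ k : ℕ,
      |∫ r in Set.Ioi (0 : ℝ),
          (Real.exp (-r ^ (2 * p) + r ^ 2) * Real.sin (r ^ (2 * q))) *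
            Real.exp (-r ^ 2) * r ^ (2 * k + 1)| ≤
        Real.Gamma (((k : ℝ) + 2) / q) / (2 * q + 1) := by
  intro k
  have hq : 0 < q := by linarith
  rw [subst_JJ p q hp hpq k]
  have m := main_bound (1 / q) (p / q) (by positivity)
    (by gcongr) (by rw [div_lt_one hq]; exact hpq) k
  rw [show ((k:ℝ) + 1) * (1 / q) + 1 / q = ((k:ℝ) + 2) / q by field_simp; ring,
    show ((k:ℝ) + 1) * (1 / q) = ((k:ℝ) + 1) / q by ring] at m
  rw [abs_mul, abs_of_pos (by positivity), le_div_iff₀ (by positivity)]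
  refine le_trans (le_of_eq ?_) m
  field_simp
end

section
/- Moment vanishing implies support restriction (used via Boas Thm 6.9.5): if V : [0,R] → ℝ is bounded measurable and there exist θ ∈ (0,1), b ∈ (0,R], and C > 0 with |∫_0^R V(r) r^{2k} dr| ≤ C·(θ b)^{2k} for all k ∈ ℕ, then V(r) = 0 for almost every r ∈ (θb, R]. -/
open MeasureTheory Filter Topology in
theorem stmt17_expm1 (x : ℝ) :
    HasSum (fun n : ℕ => x ^ (n + 1) / ((n + 1).factorial : ℝ)) (Real.exp x - 1) := by
  have h := NormedSpace.expSeries_div_hasSum_exp (𝔸 := ℝ) x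
  rw [← Real.exp_eq_exp_ℝ] at h
  have h2 := (hasSum_nat_add_iff' 1).mpr h
  simpa using h2

open MeasureTheory Filter Topology in
theorem stmt17_bound (R a C M : ℝ) (hR : 0 < R) (ha : 0 < a)
    (V : ℝ → ℝ) (hmeas : Measurable V) (hbdd : ∀ r ∈ Set.Icc (0 : ℝ) R, |V r| ≤ M)
    (hmom : ∀ k : ℕ, |∫ r in (0 : ℝ)..R, V r * r ^ (2 * k)| ≤ C * a ^ (2 * k))
    (y : ℝ) (hy : a < y) (m : ℕ) :
    |∫ r in (0 : ℝ)..R, V r * (Real.exp (-(r / y) ^ (2 * m)) - 1)| ≤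
      C * (Real.exp ((a / y) ^ (2 * m)) - 1) := by
  have hy0 : 0 < y := ha.trans hy
  have hM : 0 ≤ M := (abs_nonneg _).trans (hbdd 0 ⟨le_rfl, hR.le⟩)
  have hs := intervalIntegral.hasSum_integral_of_dominated_convergence
    (a := 0) (b := R) (μ := volume)
    (F := fun (n : ℕ) r => V r * ((-(r / y) ^ (2 * m)) ^ (n + 1) / ((n + 1).factorial : ℝ)))
    (f := fun r => V r * (Real.exp (-(r / y) ^ (2 * m)) - 1))
    (fun n _ => M * (((R / y) ^ (2 * m)) ^ (n + 1) / ((n + 1).factorial : ℝ)))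
    (fun n => (by fun_prop : Measurable _).aestronglyMeasurable)
    (fun n => Eventually.of_forall fun t ht => by
      rw [Set.uIoc_of_le hR.le] at ht
      rw [norm_mul, norm_div, norm_pow, norm_neg, norm_pow, Real.norm_eq_abs, Real.norm_eq_abs,
        Real.norm_eq_abs, abs_of_nonneg (div_nonneg ht.1.le hy0.le), Nat.abs_cast]
      have h1 := hbdd t ⟨ht.1.le, ht.2⟩
      have h2 := ht.1.le
      have h3 := ht.2
      gcongr)
    (Eventually.of_forall fun t _ => ((stmt17_expm1 _).mul_left M).summable)
    (by simp)
    (Eventually.of_forall fun t _ => (stmt17_expm1 _).mul_left _)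
  have hs2 := (stmt17_expm1 ((a / y) ^ (2 * m))).mul_left C
  rw [← hs.tsum_eq, ← Real.norm_eq_abs]
  refine tsum_of_norm_bounded hs2 fun n => ?_
  have e : ∀ r : ℝ, V r * ((-(r / y) ^ (2 * m)) ^ (n + 1) / ((n + 1).factorial : ℝ)) =
      ((-1) ^ (n + 1) * (1 / y) ^ (2 * (m * (n + 1))) / ((n + 1).factorial : ℝ)) *
        (V r * r ^ (2 * (m * (n + 1)))) := by
    intro r
    rw [neg_pow, ← pow_mul, mul_assoc 2, div_eq_mul_one_div r, mul_pow]
    ring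
  simp_rw [e]
  rw [intervalIntegral.integral_const_mul, norm_mul, norm_div, norm_mul, norm_pow, norm_neg,
    norm_one, one_pow, one_mul, norm_pow, Real.norm_eq_abs, Real.norm_eq_abs, Real.norm_eq_abs,
    Nat.abs_cast, abs_of_pos (by positivity : 0 < 1 / y)]
  calc _ ≤ (1 / y) ^ (2 * (m * (n + 1))) / ((n + 1).factorial : ℝ) *
        (C * a ^ (2 * (m * (n + 1)))) := by
        gcongr
        exact hmom _
    _ = _ := by
        rw [← pow_mul, mul_assoc 2, div_eq_mul_one_div a, mul_pow]
        ring

open MeasureTheory Filter Topology in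
theorem stmt17_tail (R a C M : ℝ) (hR : 0 < R) (ha : 0 < a)
    (V : ℝ → ℝ) (hmeas : Measurable V) (hbdd : ∀ r ∈ Set.Icc (0 : ℝ) R, |V r| ≤ M)
    (hmom : ∀ k : ℕ, |∫ r in (0 : ℝ)..R, V r * r ^ (2 * k)| ≤ C * a ^ (2 * k))
    (hint : IntervalIntegrable V volume 0 R)
    (y : ℝ) (hy : a < y) (hyR : y ≤ R) : ∫ r in y..R, V r = 0 := by
  have hy0 : 0 < y := ha.trans hy
  have hM : 0 ≤ M := (abs_nonneg _).trans (hbdd 0 ⟨le_rfl, hR.le⟩)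
  have hinf : Tendsto (fun m : ℕ => 2 * m) atTop atTop :=
    tendsto_id.const_mul_atTop' (by norm_num)
  have hz : Tendsto (fun m : ℕ => ∫ r in (0 : ℝ)..R, V r * (Real.exp (-(r / y) ^ (2 * m)) - 1))
      atTop (𝓝 0) := by
    refine squeeze_zero_norm (fun m => stmt17_bound R a C M hR ha V hmeas hbdd hmom y hy m) ?_
    have h1 : Tendsto (fun m : ℕ => (a / y) ^ (2 * m)) atTop (𝓝 0) :=
      (tendsto_pow_atTop_nhds_zero_of_lt_one (by positivity)
        ((div_lt_one hy0).mpr hy)).comp hinf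
    have h2 := (((Real.continuous_exp.tendsto 0).comp h1).sub_const 1).const_mul C
    simpa using h2
  have hl : Tendsto (fun m : ℕ => ∫ r in (0 : ℝ)..R, V r * (Real.exp (-(r / y) ^ (2 * m)) - 1))
      atTop (𝓝 (∫ r in (0 : ℝ)..R, V r * (if r ≤ y then 0 else -1))) := by
    refine intervalIntegral.tendsto_integral_filter_of_dominated_convergence (fun _ => M)
      (Eventually.of_forall fun m => (by fun_prop : Measurable _).aestronglyMeasurable)
      (Eventually.of_forall fun m => Eventually.of_forall fun t ht => ?_) (by simp) ?_
    · rw [Set.uIoc_of_le hR.le] at ht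
      have h1 := hbdd t ⟨ht.1.le, ht.2⟩
      have h2 : |Real.exp (-(t / y) ^ (2 * m)) - 1| ≤ 1 := by
        have h3 : 0 ≤ (t / y) ^ (2 * m) := pow_nonneg (div_nonneg ht.1.le hy0.le) _
        have h4 := Real.exp_pos (-(t / y) ^ (2 * m))
        have h5 : Real.exp (-(t / y) ^ (2 * m)) ≤ 1 := Real.exp_le_one_iff.mpr (by linarith)
        rw [abs_le]; constructor <;> linarith
      rw [norm_mul, Real.norm_eq_abs, Real.norm_eq_abs]
      calc _ ≤ M * 1 := by gcongr
        _ = M := mul_one M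
    · have hne : ∀ᵐ x : ℝ, x ≠ y := by simp [ae_iff, measure_singleton]
      filter_upwards [hne] with t hty ht
      rw [Set.uIoc_of_le hR.le] at ht
      have htp : 0 ≤ t / y := div_nonneg ht.1.le hy0.le
      refine Tendsto.const_mul _ ?_
      split_ifs with h
      · have h1 : Tendsto (fun m : ℕ => (t / y) ^ (2 * m)) atTop (𝓝 0) :=
          (tendsto_pow_atTop_nhds_zero_of_lt_one htp
            ((div_lt_one hy0).mpr (lt_of_le_of_ne h hty))).comp hinf
        have h2 := ((Real.continuous_exp.tendsto _).comp h1.neg).sub_const 1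
        simpa using h2
      · have h1 : Tendsto (fun m : ℕ => (t / y) ^ (2 * m)) atTop atTop :=
          (tendsto_pow_atTop_atTop_of_one_lt
            ((one_lt_div hy0).mpr (not_le.mp h))).comp hinf
        have h2 := (Real.tendsto_exp_neg_atTop_nhds_zero.comp h1).sub_const 1
        simpa using h2
  have h0 := tendsto_nhds_unique hl hz
  have hyu : y ∈ Set.uIcc 0 R := by rw [Set.uIcc_of_le hR.le]; exact ⟨hy0.le, hyR⟩
  have e1 : Set.EqOn (fun r => V r * (if r ≤ y then (0:ℝ) else -1)) (fun _ => 0)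
      (Set.uIoc 0 y) := by
    intro r hr
    rw [Set.uIoc_of_le hy0.le] at hr
    simp [hr.2]
  have e2 : Set.EqOn (fun r => V r * (if r ≤ y then (0:ℝ) else -1)) (fun r => -V r)
      (Set.uIoc y R) := by
    intro r hr
    rw [Set.uIoc_of_le hyR] at hr
    simp [not_le.mpr hr.1]
  have i2 : IntervalIntegrable (fun r => -V r) volume y R :=
    (hint.mono_set (Set.uIcc_subset_uIcc hyu Set.right_mem_uIcc)).neg
  rw [← intervalIntegral.integral_add_adjacent_intervals (b := y)
    (IntervalIntegrable.congr e1.symm (by simp)) (IntervalIntegrable.congr e2.symm i2),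
    intervalIntegral.integral_congr_ae (Eventually.of_forall e1), intervalIntegral.integral_congr_ae (Eventually.of_forall e2)] at h0
  simpa using h0

theorem stmt17 (R b θ C : ℝ) (hR : 0 < R) (hb : 0 < b) (hbR : b ≤ R)
    (hθ : θ ∈ Set.Ioo (0 : ℝ) 1) (hC : 0 < C)
    (V : ℝ → ℝ) (hmeas : Measurable V) (hbdd : ∃ M, ∀ r ∈ Set.Icc (0 : ℝ) R, |V r| ≤ M)
    (hmom : ∀ k : ℕ, |∫ r in (0 : ℝ)..R, V r * r ^ (2 * k)| ≤ C * (θ * b) ^ (2 * k)) :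
    ∀ᵐ r : ℝ, r ∈ Set.Ioc (θ * b) R → V r = 0 := by
  obtain ⟨M, hM⟩ := hbdd
  have ha : 0 < θ * b := mul_pos hθ.1 hb
  have hint : IntervalIntegrable V MeasureTheory.volume 0 R := by
    refine (intervalIntegrable_const (c := M)).mono_fun
      hmeas.aestronglyMeasurable ?_
    refine (MeasureTheory.ae_restrict_iff' measurableSet_uIoc).mpr
      (Filter.Eventually.of_forall fun t ht => ?_)
    rw [Set.uIoc_of_le hR.le] at ht
    exact (hM t ⟨ht.1.le, ht.2⟩).trans (le_abs_self M)
  have hne : ∀ᵐ x : ℝ, x ≠ R := by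
    simp [MeasureTheory.ae_iff, MeasureTheory.measure_singleton]
  filter_upwards [hint.ae_hasDerivAt_integral, hne] with x hx hxR hxm
  have h1 := hx (by rw [Set.uIcc_of_le hR.le]; exact ⟨(ha.trans hxm.1).le, hxm.2⟩) R
    Set.right_mem_uIcc
  refine h1.unique ((hasDerivAt_const x (0:ℝ)).congr_of_eventuallyEq ?_)
  filter_upwards [Ioo_mem_nhds hxm.1 (lt_of_le_of_ne hxm.2 hxR)] with y hy
  rw [intervalIntegral.integral_symm,
    stmt17_tail R (θ * b) C M hR ha V hmeas hM hmom hint y hy.1 hy.2.le, neg_zero]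
end
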